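/- arXiv:0905.1863 — 2 statements merged into one kernel-verified Lean document; each statement's English description precedes it below -/
import Mathlib

section
/- Assume μ and σ are bounded and continuous, σ(t,x) is invertible for every (t,x), and F is continuous in all variables and Lipschitz in (r,p,γ) uniformly in (t,x). Let φ : [0,T]×ℝ^d → ℝ be of class C^∞, bounded with bounded derivatives of all orders. Then for every (t,x) ∈ [0,T)×ℝ^d, the quotient ([c+φ](t',x') − T_h[c+φ](t',x'))/h converges to −(𝓛^X φ(t,x) + F(t, x, φ(t,x), Dφ(t,x), D²φ(t,x))) as (t',x') → (t,x), h ↓ 0 and c → 0 with the constraint t' + h ≤ T, where c + φ denotes the function (s,y) ↦ c + φ(s,y), 𝓛^X φ := ∂_t φ + μ·Dφ + (1/2)Tr[a D²φ], and Dφ, D²φ are the spatial gradient and Hessian of φ. -/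
/-!
Stein's identity `E[f(Z) Z] = E[Df(Z)]` moves the singular weights `H_1^h` and `H_2^h` onto the test
function, so `T_h` passes to `F` the means of `φ`, `Dφ` and `D²φ` after one Euler step. By Brownian
scaling these are means over one fixed standard Gaussian vector, jointly continuous in the starting
point, the coefficients and `r = √h` up to `r = 0`; this gives the limit of the `F` term. For the
difference quotient, Dynkin's formula reads `d/dr E[φ] = 2 r E[𝓛φ]`, and Cauchy's mean value theorem
against `r ↦ r²` turns the quotient into the mean of `𝓛φ` at some `ξ ∈ (0, √h)`, which converges to
`𝓛^X φ(t,x)`. The constant `c` cancels in the numerator and only shifts the value passed to `F`.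
-/

open MeasureTheory ProbabilityTheory Matrix Real Set Function

noncomputable section

attribute [local instance] Matrix.normedAddCommGroup Matrix.normedSpace

abbrev Vec (d : ℕ) := Fin d → ℝ
abbrev Mat (d : ℕ) := Matrix (Fin d) (Fin d) ℝ

/-- Law of the Gaussian vector `W_h` in `ℝ^d`, centered with covariance `h · I_d`. -/
def gaussVec (d : ℕ) (h : ℝ) : Measure (Vec d) :=
  Measure.pi fun _ => gaussianReal 0 h.toNNReal

/-- One step Euler scheme `X̂_h^{t,x} = x + μ(t,x) h + σ(t,x) W_h`. -/
def euler {d : ℕ} (μ : ℝ → Vec d → Vec d) (σ : ℝ → Vec d → Mat d)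
    (h t : ℝ) (x w : Vec d) : Vec d :=
  x + h • μ t x + (σ t x).mulVec w

/-- Weight `H_1^h(t,x) = (σ(t,x)ᵀ)⁻¹ W_h / h`. -/
def H1w {d : ℕ} (σ : ℝ → Vec d → Mat d) (h t : ℝ) (x w : Vec d) : Vec d :=
  (1 / h) • ((σ t x)ᵀ⁻¹.mulVec w)

/-- Weight `H_2^h(t,x) = (σ(t,x)ᵀ)⁻¹ (W_h W_hᵀ − h I_d) σ(t,x)⁻¹ / h²`. -/
def H2w {d : ℕ} (σ : ℝ → Vec d → Mat d) (h t : ℝ) (x w : Vec d) : Mat d :=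
  (1 / h ^ 2) • ((σ t x)ᵀ⁻¹ * (vecMulVec w w - h • (1 : Mat d)) * (σ t x)⁻¹)

/-- One-step operator acting on the next-time function `ψ`. -/
def step {d : ℕ} (F : ℝ → Vec d → ℝ → Vec d → Mat d → ℝ)
    (μ : ℝ → Vec d → Vec d) (σ : ℝ → Vec d → Mat d)
    (h t : ℝ) (ψ : Vec d → ℝ) (x : Vec d) : ℝ :=
  (∫ w, ψ (euler μ σ h t x w) ∂gaussVec d h)
    + h * F t x (∫ w, ψ (euler μ σ h t x w) ∂gaussVec d h)
        (fun i => ∫ w, ψ (euler μ σ h t x w) * H1w σ h t x w i ∂gaussVec d h)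
        (Matrix.of fun i j => ∫ w, ψ (euler μ σ h t x w) * H2w σ h t x w i j ∂gaussVec d h)

/-- The operator `T_h[ψ](t,x)`. -/
def Th {d : ℕ} (F : ℝ → Vec d → ℝ → Vec d → Mat d → ℝ)
    (μ : ℝ → Vec d → Vec d) (σ : ℝ → Vec d → Mat d)
    (ψ : ℝ → Vec d → ℝ) (h t : ℝ) (x : Vec d) : ℝ :=
  step F μ σ h t (ψ (t + h)) x

/-- Spatial gradient of `φ(t,·)` as a vector. -/
def gradx {d : ℕ} (φ : ℝ → Vec d → ℝ) (t : ℝ) (x : Vec d) : Vec d :=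
  fun i => fderiv ℝ (φ t) x (Pi.single i 1)

/-- Spatial Hessian of `φ(t,·)` as a matrix. -/
def hessx {d : ℕ} (φ : ℝ → Vec d → ℝ) (t : ℝ) (x : Vec d) : Mat d :=
  Matrix.of fun i j =>
    fderiv ℝ (fun y => fderiv ℝ (φ t) y (Pi.single j 1)) x (Pi.single i 1)

/-- The Dynkin operator `𝓛^X φ = ∂_t φ + μ·Dφ + (1/2) Tr[σσᵀ D²φ]`. -/
def LX {d : ℕ} (μ : ℝ → Vec d → Vec d) (σ : ℝ → Vec d → Mat d)
    (φ : ℝ → Vec d → ℝ) (t : ℝ) (x : Vec d) : ℝ :=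
  deriv (fun s => φ s x) t + μ t x ⬝ᵥ gradx φ t x
    + (1 / 2) * ((σ t x * (σ t x)ᵀ) * hessx φ t x).trace

open Filter
open scoped NNReal Topology

/-! ### Gaussian integration by parts -/

theorem hasDerivAt_gaussianPDFReal (m : ℝ) (v : ℝ≥0) (s : ℝ) :
    HasDerivAt (gaussianPDFReal m v) (-((s - m) / v) * gaussianPDFReal m v s) s := by
  have hexponent : HasDerivAt (fun y : ℝ => -(y - m) ^ 2 / (2 * (v : ℝ))) (-((s - m) / v)) s := by
    refine ((((hasDerivAt_id s).sub_const m).pow 2).neg.div_const (2 * (v : ℝ))).congr_deriv ?_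
    simp only [id, Nat.cast_ofNat, Nat.add_one_sub_one, pow_one, mul_one]
    rw [neg_div, mul_div_mul_left _ _ two_ne_zero]
  rw [gaussianPDFReal_def]
  exact (hexponent.exp.const_mul _).congr_deriv (by ring)

theorem integrable_gaussianReal_iff {E : Type*} [NormedAddCommGroup E] [NormedSpace ℝ E]
    {m : ℝ} {v : ℝ≥0} (hv : v ≠ 0) {f : ℝ → E} :
    Integrable f (gaussianReal m v) ↔ Integrable fun s => gaussianPDFReal m v s • f s := by
  rw [gaussianReal_of_var_ne_zero _ hv, integrable_withDensity_iff_integrable_smul'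
    (measurable_gaussianPDF _ _) (ae_of_all _ fun _ => gaussianPDF_lt_top)]
  simp only [toReal_gaussianPDF]

theorem integral_mul_sub_gaussianReal (m : ℝ) (v : ℝ≥0) {f f' : ℝ → ℝ}
    (hf : ∀ s, HasDerivAt f (f' s) s)
    (hfi : Integrable f (gaussianReal m v))
    (hfmul : Integrable (fun s => f s * (s - m)) (gaussianReal m v))
    (hf' : Integrable f' (gaussianReal m v)) :
    ∫ s, f s * (s - m) ∂gaussianReal m v = v * ∫ s, f' s ∂gaussianReal m v := by
  obtain rfl | hv := eq_or_ne v 0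
  · simp
  rw [integrable_gaussianReal_iff hv] at hfi hfmul hf'
  have hv' : (v : ℝ) ≠ 0 := NNReal.coe_ne_zero.2 hv
  have hdensity (s : ℝ) : f s * (-((s - m) / v) * gaussianPDFReal m v s)
      = -(v : ℝ)⁻¹ * gaussianPDFReal m v s • (f s * (s - m)) := by
    rw [smul_eq_mul]; ring
  have hparts := integral_mul_deriv_eq_deriv_mul_of_integrable (fun s _ => hf s)
    (fun s _ => hasDerivAt_gaussianPDFReal m v s)
    ((hfmul.const_mul (-(v : ℝ)⁻¹)).congr (ae_of_all _ fun s => (hdensity s).symm))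
    (hf'.congr (ae_of_all _ fun s => mul_comm _ _))
    (hfi.congr (ae_of_all _ fun s => mul_comm _ _))
  simp_rw [hdensity, integral_const_mul, mul_comm (f' _), ← smul_eq_mul (gaussianPDFReal m v _),
    ← integral_gaussianReal_eq_integral_smul hv] at hparts
  field_simp at hparts
  linarith

theorem integral_mul_sub_pi_gaussianReal {n : ℕ} (m : Fin n → ℝ) (v : Fin n → ℝ≥0) (k : Fin n)
    {f f' : (Fin n → ℝ) → ℝ}
    (hf : ∀ w s, HasDerivAt (fun s => f (update w k s)) (f' (update w k s)) s)
    (hfi : Integrable f (Measure.pi fun i => gaussianReal (m i) (v i)))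
    (hfmul : Integrable (fun w => f w * (w k - m k)) (Measure.pi fun i => gaussianReal (m i) (v i)))
    (hf' : Integrable f' (Measure.pi fun i => gaussianReal (m i) (v i))) :
    ∫ w, f w * (w k - m k) ∂Measure.pi (fun i => gaussianReal (m i) (v i))
      = v k * ∫ w, f' w ∂Measure.pi fun i => gaussianReal (m i) (v i) := by
  obtain ⟨n, rfl⟩ : ∃ l, n = l + 1 := Nat.exists_eq_add_one.2 k.pos
  set γ : Measure (Fin (n + 1) → ℝ) := Measure.pi fun i => gaussianReal (m i) (v i)
  set ν : Measure (Fin n → ℝ) :=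
    Measure.pi fun i => gaussianReal (m (k.succAbove i)) (v (k.succAbove i))
  have hpres : MeasurePreserving (MeasurableEquiv.piFinSuccAbove (fun _ => ℝ) k).symm
      ((gaussianReal (m k) (v k)).prod ν) γ :=
    (measurePreserving_piFinSuccAbove (fun i => gaussianReal (m i) (v i)) k).symm
  have hprod {g : (Fin (n + 1) → ℝ) → ℝ} (hg : Integrable g γ) :
      Integrable (fun q : ℝ × (Fin n → ℝ) => g (k.insertNth q.1 q.2))
        ((gaussianReal (m k) (v k)).prod ν) :=
    (hpres.integrable_comp_emb (MeasurableEquiv.measurableEmbedding _)).2 hg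
  have hfubini {g : (Fin (n + 1) → ℝ) → ℝ} (hg : Integrable g γ) :
      ∫ w, g w ∂γ = ∫ y, ∫ s, g (k.insertNth s y) ∂gaussianReal (m k) (v k) ∂ν := by
    rw [← hpres.integral_comp', ← integral_prod_symm _ (hprod hg)]
    rfl
  rw [hfubini hfmul, hfubini hf', ← integral_const_mul]
  refine integral_congr_ae ?_
  filter_upwards [(hprod hfi).prod_left_ae, (hprod hfmul).prod_left_ae, (hprod hf').prod_left_ae]
    with y hfy hfmuly hf'y
  simp only [Fin.insertNth_apply_same] at hfmuly ⊢
  exact integral_mul_sub_gaussianReal (m k) (v k)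
    (fun s => by simpa using hf (k.insertNth 0 y) s) hfy hfmuly hf'y

instance isGaussian_gaussVec (d : ℕ) (h : ℝ) : IsGaussian (gaussVec d h) := by
  have hcoord (i : Fin d) : HasGaussianLaw (fun w : Vec d => w i) (gaussVec d h) :=
    ⟨by rw [gaussVec, (measurePreserving_eval _ i).map_eq]; infer_instance⟩
  have hindep : iIndepFun (fun (i : Fin d) (w : Vec d) => w i) (gaussVec d h) :=
    iIndepFun_pi (X := fun _ => id) fun _ => aemeasurable_id
  simpa using! (hindep.hasGaussianLaw hcoord).isGaussian_map

theorem memLp_dotProduct_gaussVec {d : ℕ} (h : ℝ) (v : Vec d) :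
    MemLp (fun w => v ⬝ᵥ w) 2 (gaussVec d h) :=
  (dotProductBilin ℝ ℝ v).toContinuousLinearMap.comp_memLp' IsGaussian.memLp_two_id

theorem integrable_dotProduct_gaussVec {d : ℕ} (h : ℝ) (v : Vec d) :
    Integrable (fun w => v ⬝ᵥ w) (gaussVec d h) :=
  (memLp_dotProduct_gaussVec h v).integrable one_le_two

theorem integrable_coord_gaussVec {d : ℕ} (h : ℝ) (i : Fin d) :
    Integrable (fun w => w i) (gaussVec d h) := by
  simpa using integrable_dotProduct_gaussVec h (Pi.single i 1)

theorem integral_mul_dotProduct_gaussVec {d : ℕ} {h : ℝ} (hh : 0 ≤ h) {f : Vec d → ℝ}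
    (hf : Differentiable ℝ f) (hfi : Integrable f (gaussVec d h))
    (hfmul : ∀ k, Integrable (fun w => f w * w k) (gaussVec d h))
    (hf' : Integrable (fderiv ℝ f) (gaussVec d h)) (v : Vec d) :
    ∫ w, f w * (v ⬝ᵥ w) ∂gaussVec d h = h * ∫ w, fderiv ℝ f w v ∂gaussVec d h := by
  have hcoord (k : Fin d) :
      ∫ w, f w * w k ∂gaussVec d h = h * (∫ w, fderiv ℝ f w ∂gaussVec d h) (Pi.single k 1) := by
    rw [ContinuousLinearMap.integral_apply hf']
    simpa [gaussVec, hh] using integral_mul_sub_pi_gaussianReal 0 (fun _ => h.toNNReal) k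
      (fun w s => (hf _).hasFDerivAt.comp_hasDerivAt s (hasDerivAt_update w k s)) hfi
      (by simpa using! hfmul k) (hf'.apply_continuousLinearMap _)
  calc ∫ w, f w * (v ⬝ᵥ w) ∂gaussVec d h
      = ∫ w, ∑ k, v k * (f w * w k) ∂gaussVec d h := by
        simp only [dotProduct, Finset.mul_sum, mul_left_comm]
    _ = ∑ k, v k * (h * (∫ w, fderiv ℝ f w ∂gaussVec d h) (Pi.single k 1)) := by
        rw [integral_finsetSum _ fun k _ => (hfmul k).const_mul _]
        simp only [integral_const_mul, hcoord]
    _ = h * (∫ w, fderiv ℝ f w ∂gaussVec d h) v := by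
        conv_rhs => rw [pi_eq_sum_univ' v]
        simp only [map_sum, map_smul, Finset.mul_sum, smul_eq_mul, mul_left_comm]
    _ = h * ∫ w, fderiv ℝ f w v ∂gaussVec d h := by rw [ContinuousLinearMap.integral_apply hf']

/-! ### Bounded functions with bounded derivatives -/

section BddContDiff

variable {E F G : Type*} [NormedAddCommGroup E] [NormedSpace ℝ E]
  [NormedAddCommGroup F] [NormedSpace ℝ F] [NormedAddCommGroup G] [NormedSpace ℝ G]

/-- The class `C_b^n` of `C^n` maps that are bounded together with their derivatives of order at
most `n`. -/
structure BddContDiff (n : ℕ) (f : E → F) : Prop where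
  contDiff : ContDiff ℝ n f
  bdd : ∀ k ≤ n, ∃ C, ∀ x, ‖iteratedFDeriv ℝ k f x‖ ≤ C

namespace BddContDiff

variable {n : ℕ} {f : E → F}

theorem continuous (hf : BddContDiff n f) : Continuous f := hf.contDiff.continuous

theorem differentiable (hf : BddContDiff (n + 1) f) : Differentiable ℝ f :=
  hf.contDiff.differentiable (by simp)

theorem exists_norm_le (hf : BddContDiff n f) : ∃ C, ∀ x, ‖f x‖ ≤ C := by
  simpa using hf.bdd 0 n.zero_le

theorem of_succ (hf : BddContDiff (n + 1) f) : BddContDiff n f :=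
  ⟨hf.contDiff.of_le (by simp), fun k hk => hf.bdd k (hk.trans n.le_succ)⟩

protected theorem fderiv (hf : BddContDiff (n + 1) f) : BddContDiff n (fderiv ℝ f) :=
  ⟨hf.contDiff.fderiv_right (by simp), fun k hk => by
    simpa only [norm_iteratedFDeriv_fderiv] using hf.bdd (k + 1) (by lia)⟩

theorem clm_comp (L : F →L[ℝ] G) (hf : BddContDiff n f) : BddContDiff n fun x => L (f x) := by
  refine ⟨L.contDiff.comp hf.contDiff, fun k hk => ?_⟩
  obtain ⟨C, hC⟩ := hf.bdd k hk
  refine ⟨‖L‖ * C, fun x => ?_⟩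
  calc ‖iteratedFDeriv ℝ k (L ∘ f) x‖
      ≤ ‖L‖ * ‖iteratedFDeriv ℝ k f x‖ :=
        L.norm_iteratedFDeriv_comp_left hf.contDiff.contDiffAt (mod_cast hk)
    _ ≤ ‖L‖ * C := by gcongr; exact hC x

theorem apply_const {f : E → F →L[ℝ] G} (hf : BddContDiff n f) (v : F) :
    BddContDiff n fun x => f x v :=
  hf.clm_comp (ContinuousLinearMap.apply ℝ G v)

theorem const_add (c : F) (hf : BddContDiff n f) : BddContDiff n fun x => c + f x := by
  refine ⟨contDiff_const.add hf.contDiff, fun k hk => ?_⟩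
  obtain ⟨C, hC⟩ := hf.bdd k hk
  refine ⟨‖c‖ + C, fun x => ?_⟩
  have hsum : iteratedFDeriv ℝ k (fun x => c + f x) x
      = iteratedFDeriv ℝ k (fun _ => c) x + iteratedFDeriv ℝ k f x :=
    iteratedFDeriv_add_apply contDiffAt_const (hf.contDiff.contDiffAt.of_le (mod_cast hk))
  rw [hsum]
  refine (norm_add_le _ _).trans (add_le_add ?_ (hC x))
  rcases k with _ | k
  · simp
  · simp [iteratedFDeriv_const_of_ne]

variable {α : Type*} [MeasurableSpace α] [TopologicalSpace α] [OpensMeasurableSpace α]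
  {ν : Measure α}

theorem integrable_comp [SecondCountableTopology α] [IsFiniteMeasure ν] (hf : BddContDiff n f)
    {q : α → E} (hq : Continuous q) : Integrable (fun z => f (q z)) ν :=
  let ⟨C, hC⟩ := hf.exists_norm_le
  .of_bound (hf.continuous.comp hq).aestronglyMeasurable C (ae_of_all _ fun z => hC (q z))

theorem integrable_bilin_comp {H : Type*} [NormedAddCommGroup H] [NormedSpace ℝ H]
    [SecondCountableTopology α] (hf : BddContDiff n f) (B : F →L[ℝ] G →L[ℝ] H) {q : α → E}
    (hq : Continuous q) {u : α → G} (hu : Integrable u ν) :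
    Integrable (fun z => B (f (q z)) (u z)) ν :=
  let ⟨C, hC⟩ := hf.exists_norm_le
  B.integrable_of_bilin_of_bdd_left C (hf.continuous.comp hq).aestronglyMeasurable
    (ae_of_all _ fun z => hC (q z)) hu

theorem integrable_comp_mul [SecondCountableTopology α] {f : E → ℝ} (hf : BddContDiff n f)
    {q : α → E} (hq : Continuous q) {u : α → ℝ} (hu : Integrable u ν) :
    Integrable (fun z => f (q z) * u z) ν :=
  hf.integrable_bilin_comp (ContinuousLinearMap.mul ℝ ℝ) hq hu

end BddContDiff

end BddContDiff

/-! ### Integration by parts along an affine map -/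

section Affine

variable {E : Type*} [NormedAddCommGroup E] [NormedSpace ℝ E] {d : ℕ} {h : ℝ} {f : E → ℝ}

theorem fderiv_apply_const {F : Type*} [NormedAddCommGroup F] [NormedSpace ℝ F]
    {g : E → F →L[ℝ] ℝ} {q : E} (hg : DifferentiableAt ℝ g q) (u : E) (v : F) :
    fderiv ℝ (fun q => g q v) q u = fderiv ℝ g q u v := by
  simp [fderiv_clm_apply hg]

theorem hasFDerivAt_dotProduct_right (v w : Vec d) :
    HasFDerivAt (fun w => v ⬝ᵥ w) (dotProductBilin ℝ ℝ v).toContinuousLinearMap w :=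
  (dotProductBilin ℝ ℝ v).toContinuousLinearMap.hasFDerivAt

theorem continuous_affine (a : E) (L : Vec d →L[ℝ] E) : Continuous fun w => a + L w := by fun_prop

theorem hasFDerivAt_comp_affine (hf : Differentiable ℝ f) (a : E) (L : Vec d →L[ℝ] E)
    (w : Vec d) : HasFDerivAt (fun w => f (a + L w)) (fderiv ℝ f (a + L w) ∘L L) w :=
  (hf _).hasFDerivAt.comp w (L.hasFDerivAt.const_add a)

theorem integral_comp_affine_mul_dotProduct (hh : 0 ≤ h) (hf : BddContDiff 1 f) (a : E)
    (L : Vec d →L[ℝ] E) (v : Vec d) :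
    ∫ w, f (a + L w) * (v ⬝ᵥ w) ∂gaussVec d h
      = h * ∫ w, fderiv ℝ f (a + L w) (L v) ∂gaussVec d h := by
  have haffine := continuous_affine a L
  have hderiv := hasFDerivAt_comp_affine hf.differentiable a L
  have hfderiv := funext fun w => (hderiv w).fderiv
  have hfmul (i : Fin d) : Integrable (fun w => f (a + L w) * w i) (gaussVec d h) :=
    hf.integrable_comp_mul haffine (integrable_coord_gaussVec h i)
  have hf' : Integrable (fderiv ℝ fun w => f (a + L w)) (gaussVec d h) := by
    rw [hfderiv]
    exact (hf.fderiv.clm_comp (ContinuousLinearMap.precomp ℝ L)).integrable_comp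
      (ν := gaussVec d h) haffine
  rw [integral_mul_dotProduct_gaussVec hh (fun w => (hderiv w).differentiableAt)
    (hf.integrable_comp haffine) hfmul hf', hfderiv]
  rfl

theorem integrable_comp_affine_mul_dotProduct_mul_dotProduct (hf : BddContDiff 0 f) (a : E)
    (L : Vec d →L[ℝ] E) (v v' : Vec d) :
    Integrable (fun w => f (a + L w) * (v ⬝ᵥ w) * (v' ⬝ᵥ w)) (gaussVec d h) := by
  simpa only [mul_assoc] using! hf.integrable_comp_mul (continuous_affine a L)
    ((memLp_dotProduct_gaussVec h v).integrable_mul (memLp_dotProduct_gaussVec h v'))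

theorem integral_comp_affine_mul_dotProduct_mul_dotProduct (hh : 0 ≤ h) (hf : BddContDiff 1 f)
    (a : E) (L : Vec d →L[ℝ] E) (v v' : Vec d) :
    ∫ w, f (a + L w) * (v ⬝ᵥ w) * (v' ⬝ᵥ w) ∂gaussVec d h
      = h * (∫ w, fderiv ℝ f (a + L w) (L v') * (v ⬝ᵥ w) ∂gaussVec d h
        + (v ⬝ᵥ v') * ∫ w, f (a + L w) ∂gaussVec d h) := by
  have haffine := continuous_affine a L
  have hv := integrable_dotProduct_gaussVec h v
  have hderiv (w : Vec d) : HasFDerivAt (fun w => f (a + L w) * (v ⬝ᵥ w)) _ w :=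
    (hasFDerivAt_comp_affine hf.differentiable a L w).mul (hasFDerivAt_dotProduct_right v w)
  have hfderiv := funext fun w => (hderiv w).fderiv
  have hfmul (i : Fin d) :
      Integrable (fun w => f (a + L w) * (v ⬝ᵥ w) * w i) (gaussVec d h) := by
    simpa using integrable_comp_affine_mul_dotProduct_mul_dotProduct hf.of_succ a L v
      (Pi.single i 1)
  have hf' : Integrable (fderiv ℝ fun w => f (a + L w) * (v ⬝ᵥ w)) (gaussVec d h) := by
    have hDfL := hf.fderiv.clm_comp (ContinuousLinearMap.precomp ℝ L)
    rw [hfderiv]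
    exact (Integrable.smul_const (μ := gaussVec d h) (hf.integrable_comp haffine) _).add
      (hDfL.integrable_bilin_comp (ContinuousLinearMap.lsmul ℝ ℝ).flip haffine hv)
  rw [integral_mul_dotProduct_gaussVec hh (fun w => (hderiv w).differentiableAt)
    (hf.integrable_comp_mul haffine hv) hfmul hf', hfderiv, ← integral_const_mul (v ⬝ᵥ v'),
    ← integral_add ((hf.fderiv.apply_const (L v')).integrable_comp_mul haffine hv)
      ((hf.integrable_comp haffine).const_mul _)]
  congr! 3 with w
  simp [add_comm, mul_comm]

theorem integral_comp_affine_mul_hermite (hh : 0 ≤ h) (hf : BddContDiff 2 f) (a : E)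
    (L : Vec d →L[ℝ] E) (v v' : Vec d) :
    ∫ w, f (a + L w) * ((v ⬝ᵥ w) * (v' ⬝ᵥ w) - h * (v ⬝ᵥ v')) ∂gaussVec d h
      = h ^ 2 * ∫ w, fderiv ℝ (fderiv ℝ f) (a + L w) (L v) (L v') ∂gaussVec d h := by
  simp only [mul_sub, ← mul_assoc]
  rw [integral_sub
      (integrable_comp_affine_mul_dotProduct_mul_dotProduct hf.of_succ.of_succ a L v v')
      (((hf.integrable_comp (continuous_affine a L)).mul_const _).mul_const _),
    integral_mul_const, integral_mul_const,
    integral_comp_affine_mul_dotProduct_mul_dotProduct hh hf.of_succ,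
    integral_comp_affine_mul_dotProduct hh (hf.fderiv.apply_const (L v'))]
  simp only [fderiv_apply_const (hf.fderiv.differentiable _)]
  ring

end Affine

/-! ### Mean of a test function after one Euler step -/

theorem gaussVec_eq_map_smul (d : ℕ) (h : ℝ) :
    gaussVec d h = (gaussVec d 1).map fun z => √h • z := by
  have hscale : gaussianReal 0 h.toNNReal = (gaussianReal 0 1).map (√h * ·) := by
    rw [gaussianReal_map_const_mul, mul_zero, mul_one]
    congr
    ext
    obtain hh | hh := le_total 0 h <;> simp [hh, sqrt_eq_zero_of_nonpos]
  simp only [gaussVec, hscale, toNNReal_one]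
  exact (Measure.pi_map_pi fun _ => by fun_prop).symm

theorem integral_gaussVec_eq {d : ℕ} {G : Type*} [NormedAddCommGroup G] [NormedSpace ℝ G] (h : ℝ)
    {f : Vec d → G} (hf : Continuous f) :
    ∫ w, f w ∂gaussVec d h = ∫ z, f (√h • z) ∂gaussVec d 1 := by
  rw [gaussVec_eq_map_smul, integral_map (by fun_prop) hf.aestronglyMeasurable]

section StepMean

variable {E : Type*} [NormedAddCommGroup E] [NormedSpace ℝ E] {d : ℕ}
  {G : Type*} [NormedAddCommGroup G] [NormedSpace ℝ G]

/-- `E[g(q + r² b + r L Z)]` for a standard Gaussian vector `Z`: the mean of `g` after one Euler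
step of length `r²` from the point `q`, with drift `b` and diffusion `L`. The triple `p` is
`(q, b, L)`, and `r` is the square root of the time step, in which the mean is differentiable up
to `r = 0`. -/
def stepMean (g : E → G) (p : E × E × (Vec d →L[ℝ] E)) (r : ℝ) : G :=
  ∫ z, g (p.1 + r ^ 2 • p.2.1 + r • p.2.2 z) ∂gaussVec d 1

theorem stepMean_zero [CompleteSpace G] (g : E → G) (p : E × E × (Vec d →L[ℝ] E)) :
    stepMean g p 0 = g p.1 := by
  simp [stepMean]

theorem integral_comp_affine_eq_stepMean {g : E → G} (hg : Continuous g) {h : ℝ} (hh : 0 ≤ h)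
    (q b : E) (L : Vec d →L[ℝ] E) :
    ∫ w, g (q + h • b + L w) ∂gaussVec d h = stepMean g (q, b, L) √h := by
  rw [integral_gaussVec_eq h (by fun_prop)]
  simp only [stepMean, sq_sqrt hh, map_smul]

theorem continuous_stepMean {n : ℕ} {g : E → G} (hg : BddContDiff n g) :
    Continuous fun pr : (E × E × (Vec d →L[ℝ] E)) × ℝ => stepMean g pr.1 pr.2 := by
  obtain ⟨C, hC⟩ := hg.exists_norm_le
  have hcont := hg.continuous
  refine continuous_of_dominated (fun pr => ?_) (fun pr => ae_of_all _ fun z => hC _)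
    (integrable_const C) (ae_of_all _ fun z => by fun_prop)
  exact Continuous.aestronglyMeasurable (by fun_prop)

/-- The generator `𝓛g = Dg·b + ½ ∑ₖ D²g(L eₖ, L eₖ)` of a diffusion with constant drift `b` and
diffusion `L`. -/
def generator (b : E) (L : Vec d →L[ℝ] E) (g : E → ℝ) (q : E) : ℝ :=
  fderiv ℝ g q b
    + 1 / 2 * ∑ k, fderiv ℝ (fderiv ℝ g) q (L (Pi.single k 1)) (L (Pi.single k 1))

variable {g : E → ℝ}

theorem stepMean_clm_apply {F : Type*} [NormedAddCommGroup F] [NormedSpace ℝ F] {n : ℕ}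
    {g : E → F →L[ℝ] G} (hg : BddContDiff n g)
    (p : E × E × (Vec d →L[ℝ] E)) (r : ℝ) (v : F) :
    stepMean g p r v = stepMean (fun q => g q v) p r :=
  ContinuousLinearMap.integral_apply (hg.integrable_comp (by fun_prop)) v

theorem stepMean_generator (hg : BddContDiff 2 g) (b : E) (L : Vec d →L[ℝ] E)
    (p : E × E × (Vec d →L[ℝ] E)) (r : ℝ) :
    stepMean (generator b L g) p r = stepMean (fderiv ℝ g) p r b
      + 1 / 2 * ∑ k, stepMean (fderiv ℝ (fderiv ℝ g)) p r (L (Pi.single k 1))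
          (L (Pi.single k 1)) := by
  have hsecond (k : Fin d) :=
    (hg.fderiv.fderiv.apply_const (L (Pi.single k 1))).apply_const (L (Pi.single k 1))
  have hq : Continuous fun z => p.1 + r ^ 2 • p.2.1 + r • p.2.2 z := by fun_prop
  simp only [stepMean_clm_apply hg.fderiv, stepMean_clm_apply hg.fderiv.fderiv,
    stepMean_clm_apply (hg.fderiv.fderiv.apply_const _)]
  simp only [stepMean, generator]
  rw [integral_add ((hg.fderiv.apply_const b).integrable_comp hq)
      ((integrable_finsetSum _ fun k _ => (hsecond k).integrable_comp hq).const_mul _),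
    integral_const_mul, integral_finsetSum _ fun k _ => (hsecond k).integrable_comp hq]

theorem continuous_stepMean_generator (hg : BddContDiff 2 g) :
    Continuous fun pr : (E × E × (Vec d →L[ℝ] E)) × ℝ =>
      stepMean (generator pr.1.2.1 pr.1.2.2 g) pr.1 pr.2 := by
  have hfirst := continuous_stepMean (d := d) hg.fderiv
  have hsecond := continuous_stepMean (d := d) hg.fderiv.fderiv
  simp only [stepMean_generator hg]
  fun_prop

theorem integral_fderiv_apply_eq_stepMean (hg : BddContDiff 2 g)
    (p : E × E × (Vec d →L[ℝ] E)) (r : ℝ) :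
    ∫ z, fderiv ℝ g (p.1 + r ^ 2 • p.2.1 + r • p.2.2 z) (p.2.2 z) ∂gaussVec d 1
      = r * ∑ k, stepMean (fderiv ℝ (fderiv ℝ g)) p r (p.2.2 (Pi.single k 1))
          (p.2.2 (Pi.single k 1)) := by
  obtain ⟨q, b, L⟩ := p
  have hDg (k : Fin d) := hg.fderiv.apply_const (L (Pi.single k 1))
  have hcoord (z : Vec d) : L z = ∑ k, z k • L (Pi.single k 1) := by
    conv_lhs => rw [pi_eq_sum_univ' z]
    simp
  have hstein (k : Fin d) :
      ∫ z, fderiv ℝ g (q + r ^ 2 • b + r • L z) (L (Pi.single k 1)) * z k ∂gaussVec d 1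
        = r * stepMean (fderiv ℝ (fderiv ℝ g)) (q, b, L) r (L (Pi.single k 1))
          (L (Pi.single k 1)) := by
    rw [stepMean_clm_apply hg.fderiv.fderiv, stepMean_clm_apply (hg.fderiv.fderiv.apply_const _)]
    simpa [stepMean, fderiv_apply_const (hg.fderiv.differentiable _), integral_const_mul] using
      integral_comp_affine_mul_dotProduct zero_le_one (hDg k) (q + r ^ 2 • b) (r • L)
        (Pi.single k 1)
  calc ∫ z, fderiv ℝ g (q + r ^ 2 • b + r • L z) (L z) ∂gaussVec d 1
      = ∫ z, ∑ k, fderiv ℝ g (q + r ^ 2 • b + r • L z) (L (Pi.single k 1)) * z k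
          ∂gaussVec d 1 := by
        congr! 2 with z
        conv_lhs => arg 2; rw [hcoord]
        simp only [map_sum, map_smul, smul_eq_mul, mul_comm]
    _ = ∑ k, r * stepMean (fderiv ℝ (fderiv ℝ g)) (q, b, L) r (L (Pi.single k 1))
          (L (Pi.single k 1)) := by
        rw [integral_finsetSum _ fun k _ => (hDg k).integrable_comp_mul (by fun_prop)
          (integrable_coord_gaussVec 1 k)]
        simp only [hstein]
    _ = r * ∑ k, stepMean (fderiv ℝ (fderiv ℝ g)) (q, b, L) r (L (Pi.single k 1))
          (L (Pi.single k 1)) := (Finset.mul_sum _ _ _).symm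

theorem hasDerivAt_stepMean (hg : BddContDiff 1 g) (p : E × E × (Vec d →L[ℝ] E)) (r : ℝ) :
    HasDerivAt (stepMean g p)
      (∫ z, fderiv ℝ g (p.1 + r ^ 2 • p.2.1 + r • p.2.2 z)
        ((2 * r) • p.2.1 + p.2.2 z) ∂gaussVec d 1) r := by
  obtain ⟨q, b, L⟩ := p
  obtain ⟨C, hC⟩ := hg.fderiv.exists_norm_le
  have hg' := hg.continuous
  have hDg := hg.fderiv.continuous
  have hpath (z : Vec d) (s : ℝ) :
      HasDerivAt (fun s : ℝ => q + s ^ 2 • b + s • L z) ((2 * s) • b + L z) s := by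
    simpa using! (((hasDerivAt_pow 2 s).smul_const b).const_add q).add
      ((hasDerivAt_id s).smul_const (L z))
  have hbound (z : Vec d) (s : ℝ) (hs : s ∈ Metric.ball r 1) :
      ‖fderiv ℝ g (q + s ^ 2 • b + s • L z) ((2 * s) • b + L z)‖
        ≤ C * (2 * (|r| + 1) * ‖b‖ + ‖L‖ * ‖z‖) := by
    have hsr : ‖s‖ ≤ |r| + 1 := by
      rw [mem_ball_iff_norm] at hs
      linarith [norm_le_norm_add_norm_sub' s r, Real.norm_eq_abs r]
    calc _ ≤ ‖fderiv ℝ g (q + s ^ 2 • b + s • L z)‖ * ‖(2 * s) • b + L z‖ :=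
          ContinuousLinearMap.le_opNorm _ _
      _ ≤ C * (2 * (|r| + 1) * ‖b‖ + ‖L‖ * ‖z‖) := by
          gcongr
          · exact (norm_nonneg _).trans (hC q)
          · exact hC _
          refine (norm_add_le _ _).trans (add_le_add ?_ (L.le_opNorm z))
          rw [norm_smul, norm_mul, norm_ofNat]
          gcongr
  have hint : Integrable (fun z : Vec d => C * (2 * (|r| + 1) * ‖b‖ + ‖L‖ * ‖z‖)) (gaussVec d 1) :=
    ((integrable_const _).add (IsGaussian.integrable_id.norm.const_mul _)).const_mul _
  exact (hasDerivAt_integral_of_dominated_loc_of_deriv_le (Metric.ball_mem_nhds r one_pos)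
    (.of_forall fun s => Continuous.aestronglyMeasurable (by fun_prop))
    (hg.integrable_comp (by fun_prop)) (Continuous.aestronglyMeasurable (by fun_prop))
    (ae_of_all _ hbound) hint
    (ae_of_all _ fun z s _ => (hg.differentiable _).hasFDerivAt.comp_hasDerivAt s (hpath z s))).2

/-- Dynkin's formula, in the square root `r` of the time. -/
theorem hasDerivAt_stepMean_generator (hg : BddContDiff 2 g) (p : E × E × (Vec d →L[ℝ] E))
    (r : ℝ) :
    HasDerivAt (stepMean g p) (2 * r * stepMean (generator p.2.1 p.2.2 g) p r) r := by
  refine (hasDerivAt_stepMean hg.of_succ p r).congr_deriv ?_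
  have hdrift : Integrable (fun z => 2 * r * fderiv ℝ g (p.1 + r ^ 2 • p.2.1 + r • p.2.2 z) p.2.1)
      (gaussVec d 1) := ((hg.fderiv.apply_const _).integrable_comp (by fun_prop)).const_mul _
  have hdiffusion :
      Integrable (fun z => fderiv ℝ g (p.1 + r ^ 2 • p.2.1 + r • p.2.2 z) (p.2.2 z))
        (gaussVec d 1) :=
    hg.fderiv.integrable_bilin_comp (.id ℝ _) (by fun_prop)
      (p.2.2.integrable_comp IsGaussian.integrable_id)
  simp only [map_add, map_smul, smul_eq_mul]
  rw [integral_add hdrift hdiffusion, integral_const_mul, integral_fderiv_apply_eq_stepMean hg,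
    stepMean_generator hg, stepMean_clm_apply hg.fderiv]
  simp only [stepMean]
  ring

/-- The substitution `h = r²` makes the mean value theorem available up to `h = 0`. -/
theorem exists_stepMean_slope_eq (hg : BddContDiff 2 g) (p : E × E × (Vec d →L[ℝ] E)) {h : ℝ}
    (hh : 0 < h) :
    ∃ ξ ∈ Ioo 0 √h, (stepMean g p √h - g p.1) / h = stepMean (generator p.2.1 p.2.2 g) p ξ := by
  have hderiv := hasDerivAt_stepMean_generator hg p
  obtain ⟨ξ, hξ, hslope⟩ := exists_ratio_hasDerivAt_eq_ratio_slope (stepMean g p) _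
    (sqrt_pos.2 hh) (fun r _ => (hderiv r).continuousAt.continuousWithinAt) (fun r _ => hderiv r)
    (· ^ 2) (2 * ·) (by fun_prop) fun r _ => by simpa using hasDerivAt_pow 2 r
  refine ⟨ξ, hξ, ?_⟩
  simp only [stepMean_zero, sq_sqrt hh.le] at hslope
  rw [div_eq_iff hh.ne']
  refine mul_right_cancel₀ (mul_pos two_pos hξ.1).ne' ?_
  linear_combination -hslope

theorem tendsto_stepMean_slope (hg : BddContDiff 2 g) (p₀ : E × E × (Vec d →L[ℝ] E)) :
    Tendsto (fun ph : (E × E × (Vec d →L[ℝ] E)) × ℝ => (stepMean g ph.1 √ph.2 - g ph.1.1) / ph.2)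
      (𝓝 p₀ ×ˢ 𝓝[>] 0) (𝓝 (generator p₀.2.1 p₀.2.2 g p₀.1)) := by
  choose! ξ hξ hslope using fun p h => exists_stepMean_slope_eq (d := d) hg p (h := h)
  have hpos : ∀ᶠ ph : (E × E × (Vec d →L[ℝ] E)) × ℝ in 𝓝 p₀ ×ˢ 𝓝[>] 0, 0 < ph.2 :=
    tendsto_snd.eventually self_mem_nhdsWithin
  have hsqrt : Tendsto (fun ph : (E × E × (Vec d →L[ℝ] E)) × ℝ => √ph.2)
      (𝓝 p₀ ×ˢ 𝓝[>] 0) (𝓝 √0) := (tendsto_snd.mono_right nhdsWithin_le_nhds).sqrt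
  rw [sqrt_zero] at hsqrt
  have hξ₀ : Tendsto (fun ph : (E × E × (Vec d →L[ℝ] E)) × ℝ => ξ ph.1 ph.2)
      (𝓝 p₀ ×ˢ 𝓝[>] 0) (𝓝 0) :=
    tendsto_of_tendsto_of_tendsto_of_le_of_le' tendsto_const_nhds hsqrt
      (hpos.mono fun ph hh => (hξ ph.1 ph.2 hh).1.le)
      (hpos.mono fun ph hh => (hξ ph.1 ph.2 hh).2.le)
  have hlim := (continuous_stepMean_generator (d := d) hg).tendsto (p₀, 0)
  rw [nhds_prod_eq, stepMean_zero] at hlim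
  exact (hlim.comp (tendsto_fst.prodMk hξ₀)).congr' (hpos.mono fun ph hh => (hslope _ _ hh).symm)

end StepMean

/-! ### The Euler scheme in space-time -/

section SpaceTime

variable {d : ℕ}

/-- The diffusion `w ↦ (0, S w)` that noise with diffusion matrix `S` induces on space-time. -/
def noiseMap (S : Mat d) : Vec d →L[ℝ] ℝ × Vec d :=
  .inr ℝ ℝ (Vec d) ∘L (mulVecLin S).toContinuousLinearMap

theorem noiseMap_apply (S : Mat d) (w : Vec d) : noiseMap S w = (0, S *ᵥ w) := rfl

theorem continuous_noiseMap : Continuous (noiseMap (d := d)) :=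
  continuous_clm_apply.2 fun w => by
    simp only [noiseMap_apply]
    fun_prop

theorem noiseMap_inv_col {S : Mat d} (hS : IsUnit S.det) (i : Fin d) :
    noiseMap S (S⁻¹.col i) = (0, Pi.single i 1) := by
  rw [noiseMap_apply, ← mulVec_single_one S⁻¹, mulVec_mulVec, mul_nonsing_inv S hS, one_mulVec]

/-- The parameters of `stepMean` for one Euler step: time has drift `1` and no noise. -/
def eulerParam (μ : ℝ → Vec d → Vec d) (σ : ℝ → Vec d → Mat d) (q : ℝ × Vec d) :
    (ℝ × Vec d) × (ℝ × Vec d) × (Vec d →L[ℝ] ℝ × Vec d) :=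
  (q, (1, μ q.1 q.2), noiseMap (σ q.1 q.2))

theorem continuousAt_eulerParam {μ : ℝ → Vec d → Vec d} {σ : ℝ → Vec d → Mat d} {q : ℝ × Vec d}
    (hμ : ContinuousAt (uncurry μ) q) (hσ : ContinuousAt (uncurry σ) q) :
    ContinuousAt (eulerParam μ σ) q :=
  continuousAt_id.prodMk
    ((continuousAt_const.prodMk hμ).prodMk (continuous_noiseMap.continuousAt.comp hσ))

variable {μ : ℝ → Vec d → Vec d} {σ : ℝ → Vec d → Mat d} {h t : ℝ} {x : Vec d}

theorem H1w_apply (w : Vec d) (i : Fin d) :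
    H1w σ h t x w i = 1 / h * ((σ t x)⁻¹.col i ⬝ᵥ w) := by
  rw [H1w, ← transpose_nonsing_inv]
  rfl

theorem H2w_apply (w : Vec d) (i j : Fin d) :
    H2w σ h t x w i j = 1 / h ^ 2 * (((σ t x)⁻¹.col i ⬝ᵥ w) * ((σ t x)⁻¹.col j ⬝ᵥ w)
      - h * ((σ t x)⁻¹.col i ⬝ᵥ (σ t x)⁻¹.col j)) := by
  simp only [H2w, ← transpose_nonsing_inv, Matrix.mul_sub, Matrix.sub_mul, Matrix.mul_smul,
    Matrix.smul_mul, mul_vecMulVec, vecMulVec_mul, Matrix.mul_one]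
  simp only [Matrix.smul_apply, Matrix.sub_apply, vecMulVec_apply, ← mulVec_transpose, smul_eq_mul]
  rfl

variable {g : ℝ × Vec d → ℝ}

theorem integral_comp_mul_H1w (hg : BddContDiff 1 g) (hh : 0 < h) (hσ : IsUnit (σ t x).det)
    (a : ℝ × Vec d) (i : Fin d) :
    ∫ w, g (a + noiseMap (σ t x) w) * H1w σ h t x w i ∂gaussVec d h
      = ∫ w, fderiv ℝ g (a + noiseMap (σ t x) w) (0, Pi.single i 1) ∂gaussVec d h := by
  simp only [H1w_apply, mul_left_comm _ (1 / h)]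
  rw [integral_const_mul, integral_comp_affine_mul_dotProduct hh.le hg, noiseMap_inv_col hσ]
  field_simp

theorem integral_comp_mul_H2w (hg : BddContDiff 2 g) (hh : 0 < h) (hσ : IsUnit (σ t x).det)
    (a : ℝ × Vec d) (i j : Fin d) :
    ∫ w, g (a + noiseMap (σ t x) w) * H2w σ h t x w i j ∂gaussVec d h
      = ∫ w, fderiv ℝ (fderiv ℝ g) (a + noiseMap (σ t x) w) (0, Pi.single i 1)
          (0, Pi.single j 1) ∂gaussVec d h := by
  simp only [H2w_apply, mul_left_comm _ (1 / h ^ 2)]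
  rw [integral_const_mul, integral_comp_affine_mul_hermite hh.le hg, noiseMap_inv_col hσ,
    noiseMap_inv_col hσ]
  field_simp

/-- The means of `g`, of its spatial gradient and of its spatial Hessian after one Euler step:
the three arguments the scheme passes to `F`. -/
def meanJet (g : ℝ × Vec d → ℝ) (p : (ℝ × Vec d) × (ℝ × Vec d) × (Vec d →L[ℝ] ℝ × Vec d))
    (r : ℝ) : ℝ × Vec d × Mat d :=
  (stepMean g p r, fun i => stepMean (fderiv ℝ g) p r (0, Pi.single i 1),
    Matrix.of fun i j =>
      stepMean (fderiv ℝ (fderiv ℝ g)) p r (0, Pi.single i 1) (0, Pi.single j 1))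

theorem continuous_meanJet (hg : BddContDiff 2 g) :
    Continuous fun pr : ((ℝ × Vec d) × (ℝ × Vec d) × (Vec d →L[ℝ] ℝ × Vec d)) × ℝ =>
      meanJet g pr.1 pr.2 := by
  have hvalue := continuous_stepMean (d := d) hg
  have hfirst := continuous_stepMean (d := d) hg.fderiv
  have hsecond := continuous_stepMean (d := d) hg.fderiv.fderiv
  unfold meanJet
  refine hvalue.prodMk ((by fun_prop : Continuous _).prodMk (continuous_matrix fun i j => ?_))
  simp only [of_apply]
  fun_prop

theorem meanJet_const_add (c : ℝ) (hg : BddContDiff 0 g)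
    (p : (ℝ × Vec d) × (ℝ × Vec d) × (Vec d →L[ℝ] ℝ × Vec d)) (r : ℝ) :
    meanJet (fun q => c + g q) p r = (c + stepMean g p r, (meanJet g p r).2) := by
  have hfderiv : fderiv ℝ (fun q => c + g q) = fderiv ℝ g := funext fun q => fderiv_const_add c
  simp only [meanJet, hfderiv]
  congr
  simp only [stepMean]
  rw [integral_add (integrable_const c) (hg.integrable_comp (by fun_prop))]
  simp

theorem Th_eq_meanJet (F : ℝ → Vec d → ℝ → Vec d → Mat d → ℝ) {ψ : ℝ → Vec d → ℝ}
    (hψ : BddContDiff 2 (uncurry ψ)) (hh : 0 < h) (hσ : IsUnit (σ t x).det) :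
    Th F μ σ ψ h t x = (meanJet (uncurry ψ) (eulerParam μ σ (t, x)) √h).1
      + h * F t x (meanJet (uncurry ψ) (eulerParam μ σ (t, x)) √h).1
        (meanJet (uncurry ψ) (eulerParam μ σ (t, x)) √h).2.1
        (meanJet (uncurry ψ) (eulerParam μ σ (t, x)) √h).2.2 := by
  have heuler (w : Vec d) : ψ (t + h) (euler μ σ h t x w)
      = uncurry ψ ((t, x) + h • (1, μ t x) + noiseMap (σ t x) w) := by
    simp [euler, noiseMap_apply]
  have hmean {f : ℝ × Vec d → ℝ} (hf : BddContDiff 0 f) :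
      ∫ w, f ((t, x) + h • (1, μ t x) + noiseMap (σ t x) w) ∂gaussVec d h
        = stepMean f (eulerParam μ σ (t, x)) √h :=
    integral_comp_affine_eq_stepMean hf.continuous hh.le _ _ _
  have hgrad (i : Fin d) := hmean (hψ.fderiv.of_succ.apply_const (0, Pi.single i 1))
  have hhess (i j : Fin d) := hmean
    ((hψ.fderiv.fderiv.apply_const (0, Pi.single i 1)).apply_const (0, Pi.single j 1))
  simp only [Th, step, heuler, integral_comp_mul_H1w hψ.of_succ hh hσ,
    integral_comp_mul_H2w hψ hh hσ, meanJet, stepMean_clm_apply hψ.fderiv,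
    stepMean_clm_apply hψ.fderiv.fderiv, stepMean_clm_apply (hψ.fderiv.fderiv.apply_const _),
    hmean hψ.of_succ.of_succ, hgrad, hhess]

/-! ### Derivatives in the space variable -/

variable {φ : ℝ → Vec d → ℝ}

theorem fderiv_uncurry_inr (hφ : DifferentiableAt ℝ (uncurry φ) (t, x)) (v : Vec d) :
    fderiv ℝ (uncurry φ) (t, x) (0, v) = fderiv ℝ (φ t) x v := by
  have hspace : HasFDerivAt (φ t) _ x := hφ.hasFDerivAt.comp x (hasFDerivAt_prodMk_right t x)
  simp [hspace.fderiv]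

theorem fderiv_uncurry_inl (hφ : DifferentiableAt ℝ (uncurry φ) (t, x)) :
    fderiv ℝ (uncurry φ) (t, x) (1, 0) = deriv (fun s => φ s x) t := by
  have htime : HasDerivAt (fun s => φ s x) (fderiv ℝ (uncurry φ) (t, x) (1, 0)) t :=
    hφ.hasFDerivAt.comp_hasDerivAt (f := fun s => (s, x)) t
      ((hasDerivAt_id t).prodMk (hasDerivAt_const t x))
  exact htime.deriv.symm

theorem gradx_apply (hφ : DifferentiableAt ℝ (uncurry φ) (t, x)) (i : Fin d) :
    gradx φ t x i = fderiv ℝ (uncurry φ) (t, x) (0, Pi.single i 1) :=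
  (fderiv_uncurry_inr hφ _).symm

theorem hessx_apply (hφ : ContDiff ℝ 2 (uncurry φ)) (i j : Fin d) :
    hessx φ t x i j
      = fderiv ℝ (fderiv ℝ (uncurry φ)) (t, x) (0, Pi.single i 1) (0, Pi.single j 1) := by
  have hDφ : Differentiable ℝ (fderiv ℝ (uncurry φ)) :=
    (hφ.fderiv_right (m := 1) (by norm_num)).differentiable one_ne_zero
  have hgrad : (fun y => fderiv ℝ (φ t) y (Pi.single j 1))
      = fun y => fderiv ℝ (uncurry φ) (t, y) (0, Pi.single j 1) :=
    funext fun y => (fderiv_uncurry_inr (hφ.differentiable two_ne_zero _) _).symm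
  rw [hessx, of_apply, hgrad, ← fderiv_apply_const (hDφ _)]
  exact (fderiv_uncurry_inr (φ := fun s y => fderiv ℝ (uncurry φ) (s, y) (0, Pi.single j 1))
    ((hDφ _).clm_apply (differentiableAt_const _)) _).symm

theorem inr_eq_sum_smul (v : Vec d) : ((0, v) : ℝ × Vec d) = ∑ k, v k • (0, Pi.single k 1) := by
  ext1
  · simp [Prod.fst_sum]
  · simpa [Prod.snd_sum] using pi_eq_sum_univ' v

theorem fderiv_uncurry_inr_eq_dotProduct (hφ : DifferentiableAt ℝ (uncurry φ) (t, x))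
    (v : Vec d) : fderiv ℝ (uncurry φ) (t, x) (0, v) = v ⬝ᵥ gradx φ t x := by
  rw [inr_eq_sum_smul]
  simp only [map_sum, map_smul, smul_eq_mul, ← gradx_apply hφ, dotProduct]

theorem fderiv_fderiv_uncurry_inr_eq_dotProduct (hφ : ContDiff ℝ 2 (uncurry φ)) (u v : Vec d) :
    fderiv ℝ (fderiv ℝ (uncurry φ)) (t, x) (0, u) (0, v) = u ⬝ᵥ hessx φ t x *ᵥ v := by
  rw [inr_eq_sum_smul u]
  simp only [map_sum, map_smul, _root_.sum_apply, _root_.smul_apply, smul_eq_mul]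
  refine Finset.sum_congr rfl fun i _ => ?_
  rw [inr_eq_sum_smul v]
  simp only [map_sum, map_smul, smul_eq_mul, ← hessx_apply hφ, mulVec, dotProduct, mul_comm]

theorem generator_eulerParam (hφ : ContDiff ℝ 2 (uncurry φ)) :
    generator (1, μ t x) (noiseMap (σ t x)) (uncurry φ) (t, x) = LX μ σ φ t x := by
  have hDφ := hφ.differentiable two_ne_zero (t, x)
  have htrace : ∑ k, (σ t x).col k ⬝ᵥ hessx φ t x *ᵥ (σ t x).col k
      = ((σ t x * (σ t x)ᵀ) * hessx φ t x).trace := by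
    rw [Matrix.mul_assoc, trace_mul_comm, Matrix.mul_assoc]
    rfl
  have hdrift : ((1, μ t x) : ℝ × Vec d) = (1, 0) + (0, μ t x) := by simp
  simp only [generator, LX, noiseMap_apply, mulVec_single_one,
    fderiv_fderiv_uncurry_inr_eq_dotProduct hφ, htrace, hdrift, map_add, fderiv_uncurry_inl hDφ,
    fderiv_uncurry_inr_eq_dotProduct hDφ]

theorem meanJet_eulerParam_zero (hφ : ContDiff ℝ 2 (uncurry φ)) :
    meanJet (uncurry φ) (eulerParam μ σ (t, x)) 0 = (φ t x, gradx φ t x, hessx φ t x) := by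
  simp only [meanJet, eulerParam, stepMean_zero, uncurry_apply_pair, ← hessx_apply hφ,
    ← gradx_apply (hφ.differentiable two_ne_zero _)]
  rfl

end SpaceTime

/-! ### Consistency -/

theorem exists_pos_forall_of_eventually {X : Type*} [PseudoMetricSpace X] {a : X} {c₀ : ℝ}
    {P : X × ℝ × ℝ → Prop} (hP : ∀ᶠ y in 𝓝 a ×ˢ 𝓝[>] 0 ×ˢ 𝓝 c₀, P y) :
    ∃ δ > 0, ∀ q h c, dist q a < δ → 0 < h → h < δ → |c - c₀| < δ → P (q, h, c) := by
  rw [← nhdsWithin_univ a, ← nhdsWithin_univ c₀, ← nhdsWithin_prod_eq, ← nhdsWithin_prod_eq,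
    Filter.Eventually, Metric.mem_nhdsWithin_iff] at hP
  obtain ⟨δ, hδ, hball⟩ := hP
  refine ⟨δ, hδ, fun q h c hq hh hhδ hc => @hball (q, h, c) ⟨?_, by simpa⟩⟩
  simp [Prod.dist_eq, Real.dist_eq, hq, hc, abs_of_pos hh, hhδ]

section Consistency

variable {d : ℕ} {μ : ℝ → Vec d → Vec d} {σ : ℝ → Vec d → Mat d}
  {F : ℝ → Vec d → ℝ → Vec d → Mat d → ℝ} {φ : ℝ → Vec d → ℝ}

theorem sub_Th_const_add_div (hφ : BddContDiff 2 (uncurry φ)) (c : ℝ) {h t : ℝ} {x : Vec d}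
    (hh : 0 < h) (hσ : IsUnit (σ t x).det) :
    ((c + φ t x) - Th F μ σ (fun s y => c + φ s y) h t x) / h
      = -((stepMean (uncurry φ) (eulerParam μ σ (t, x)) √h - φ t x) / h
        + F t x (c + stepMean (uncurry φ) (eulerParam μ σ (t, x)) √h)
          (meanJet (uncurry φ) (eulerParam μ σ (t, x)) √h).2.1
          (meanJet (uncurry φ) (eulerParam μ σ (t, x)) √h).2.2) := by
  have hjet : meanJet (uncurry fun s y => c + φ s y) (eulerParam μ σ (t, x)) √h = _ :=
    meanJet_const_add c hφ.of_succ.of_succ _ _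
  rw [Th_eq_meanJet F (ψ := fun s y => c + φ s y) (hφ.const_add c) hh hσ, hjet]
  field_simp
  ring

theorem scheme_consistency_general {t : ℝ} {x : Vec d}
    (hμ : ContinuousAt (uncurry μ) (t, x)) (hσ : ContinuousAt (uncurry σ) (t, x))
    (hσinv : IsUnit (σ t x).det)
    (hF : ContinuousAt (fun q : ℝ × Vec d × ℝ × Vec d × Mat d =>
      F q.1 q.2.1 q.2.2.1 q.2.2.2.1 q.2.2.2.2) (t, x, φ t x, gradx φ t x, hessx φ t x))
    (hφ : BddContDiff 2 (uncurry φ)) :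
    Tendsto (fun y : (ℝ × Vec d) × ℝ × ℝ =>
        ((y.2.2 + φ y.1.1 y.1.2)
          - Th F μ σ (fun s z => y.2.2 + φ s z) y.2.1 y.1.1 y.1.2) / y.2.1)
      (𝓝 (t, x) ×ˢ 𝓝[>] 0 ×ˢ 𝓝 0)
      (𝓝 (-(LX μ σ φ t x + F t x (φ t x) (gradx φ t x) (hessx φ t x)))) := by
  set l : Filter ((ℝ × Vec d) × ℝ × ℝ) := 𝓝 (t, x) ×ˢ 𝓝[>] 0 ×ˢ 𝓝 0
  have hq : Tendsto (fun y : (ℝ × Vec d) × ℝ × ℝ => y.1) l (𝓝 (t, x)) := tendsto_fst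
  have hh : Tendsto (fun y : (ℝ × Vec d) × ℝ × ℝ => y.2.1) l (𝓝[>] 0) :=
    tendsto_fst.comp tendsto_snd
  have hc : Tendsto (fun y : (ℝ × Vec d) × ℝ × ℝ => y.2.2) l (𝓝 0) := tendsto_snd.comp tendsto_snd
  have hinv : ∀ᶠ y in l, IsUnit (σ y.1.1 y.1.2).det := by
    simp only [isUnit_iff_ne_zero] at hσinv ⊢
    exact hq.eventually ((continuous_id.matrix_det.continuousAt.comp hσ).eventually_ne hσinv)
  have hp : Tendsto (fun y : (ℝ × Vec d) × ℝ × ℝ => eulerParam μ σ y.1) l _ :=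
    (continuousAt_eulerParam hμ hσ).tendsto.comp hq
  have hsqrt : Tendsto (fun y : (ℝ × Vec d) × ℝ × ℝ => √y.2.1) l (𝓝 √0) :=
    (hh.mono_right nhdsWithin_le_nhds).sqrt
  have hjet : Tendsto (fun y => meanJet (uncurry φ) (eulerParam μ σ y.1) √y.2.1) l
      (𝓝 (φ t x, gradx φ t x, hessx φ t x)) := by
    rw [← meanJet_eulerParam_zero (μ := μ) (σ := σ) hφ.contDiff, ← sqrt_zero]
    exact ((continuous_meanJet hφ).tendsto _).comp (hp.prodMk_nhds hsqrt)
  have hvalue : Tendsto (fun y => y.2.2 + stepMean (uncurry φ) (eulerParam μ σ y.1) √y.2.1) l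
      (𝓝 (φ t x)) := by
    simpa using! hc.add hjet.fst_nhds
  have hFlim := hF.tendsto.comp
    (hq.fst_nhds.prodMk_nhds (hq.snd_nhds.prodMk_nhds (hvalue.prodMk_nhds hjet.snd_nhds)))
  have hslope := (tendsto_stepMean_slope hφ _).comp (hp.prodMk hh)
  rw [← generator_eulerParam hφ.contDiff (μ := μ) (σ := σ) (t := t) (x := x)]
  refine (hslope.add hFlim).neg.congr' ?_
  filter_upwards [hinv, hh.eventually self_mem_nhdsWithin] with y hσy hhy
  exact (sub_Th_const_add_div hφ y.2.2 hhy hσy).symm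

end Consistency

/-- Consistency of the scheme: for a smooth bounded test function `φ` with bounded
derivatives, `([c+φ](t',x') − T_h[c+φ](t',x'))/h → −(𝓛^X φ + F(·, φ, Dφ, D²φ))(t,x)`
as `(t',x') → (t,x)`, `h ↓ 0`, `c → 0` with `t' + h ≤ T`. -/
theorem scheme_consistency
    (d : ℕ) (T : ℝ) (hT : 0 < T)
    (μ : ℝ → Vec d → Vec d) (σ : ℝ → Vec d → Mat d)
    (hμcont : Continuous fun q : ℝ × Vec d => μ q.1 q.2)
    (hσcont : Continuous fun q : ℝ × Vec d => σ q.1 q.2)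
    (hμbdd : ∃ C : ℝ, ∀ s y, ‖μ s y‖ ≤ C)
    (hσbdd : ∃ C : ℝ, ∀ s y, ‖σ s y‖ ≤ C)
    (hσinv : ∀ s y, IsUnit (σ s y).det)
    (F : ℝ → Vec d → ℝ → Vec d → Mat d → ℝ)
    (hFcont : Continuous fun q : ℝ × Vec d × ℝ × Vec d × Mat d =>
      F q.1 q.2.1 q.2.2.1 q.2.2.2.1 q.2.2.2.2)
    (hFlip : ∃ L : ℝ, 0 ≤ L ∧ ∀ t x r r' p p' γ γ',
      |F t x r p γ - F t x r' p' γ'| ≤ L * (|r - r'| + ‖p - p'‖ + ‖γ - γ'‖))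
    (φ : ℝ → Vec d → ℝ) (hφ : ContDiff ℝ (⊤ : ℕ∞) fun q : ℝ × Vec d => φ q.1 q.2)
    (hφbdd : ∀ n : ℕ, ∃ C : ℝ, ∀ q : ℝ × Vec d,
      ‖iteratedFDeriv ℝ n (fun q : ℝ × Vec d => φ q.1 q.2) q‖ ≤ C)
    (t : ℝ) (x : Vec d) (ht : 0 ≤ t) (htT : t < T) :
    ∀ ε > 0, ∃ δ > 0, ∀ (t' : ℝ) (x' : Vec d) (h c : ℝ),
      |t' - t| < δ → ‖x' - x‖ < δ → 0 < h → h < δ → |c| < δ →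
      0 ≤ t' → t' + h ≤ T →
      |((c + φ t' x') - Th F μ σ (fun s y => c + φ s y) h t' x') / h
          - (-(LX μ σ φ t x + F t x (φ t x) (gradx φ t x) (hessx φ t x)))| < ε := by
  have hlim := scheme_consistency_general (t := t) (x := x) hμcont.continuousAt
    hσcont.continuousAt (hσinv t x) hFcont.continuousAt
    ⟨contDiff_infty.1 hφ 2, fun k _ => hφbdd k⟩
  intro ε hε
  obtain ⟨δ, hδ, hclose⟩ := exists_pos_forall_of_eventually (Metric.tendsto_nhds.1 hlim ε hε)
  exact ⟨δ, hδ, fun t' x' h c ht' hx' hh hhδ hc _ _ => hclose (t', x') h c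
    (max_lt ht' (by rwa [dist_eq_norm])) hh hhδ (by rwa [sub_zero])⟩

end
end

section
/- Assume F satisfies Assumption F and that g : ℝ^d → ℝ is bounded. Then the family of discrete-time approximations (v^h) is uniformly bounded: there exists a constant C > 0, independent of n, such that |v^h(t_i, x)| ≤ C for all n ∈ ℕ, all i ∈ {0,…,n} and all x ∈ ℝ^d. -/
/-! Each step of the scheme is, up to a term of size `O(h)`, an average against a signed density of
mass `1 + O(h)` whose negative part is `O(h)`, so it increases the sup norm by a factor `1 + O(h)`
and a summand `O(h)`; a discrete Gronwall inequality over the `n = T / h` steps concludes.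

The density comes from the mean value theorem: if `D` is the derivative of `F t x` at a suitable
point between `0` and `E[ψ(X̂) (1, H₁, H₂)]`, the step is `E[ψ(X̂) Z] + h F(t,x,0,0,0)` with
`Z = 1 + h D(1, H₁, H₂)`. Put `u = H₁`. Since `H₂ = u uᵀ - a⁻¹ / h`,
`Z = h F_r + (1 - Tr(a⁻¹ F_γ)) + h (F_p · u + uᵀ F_γ u) ≥ -h (L + K)`, and since `H₁` and `H₂` are
centered, `E[Z] = 1 + h F_r ≤ 1 + h L`. -/

open MeasureTheory ProbabilityTheory Matrix Real Set Function

noncomputable section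

attribute [local instance] Matrix.normedAddCommGroup Matrix.normedSpace

/-- Assumption F of the paper, with explicit partial derivatives `Fr, Fp, Fγ` of `F`
in the variables `(r,p,γ)`. -/
structure AssumptionF (d : ℕ) (σ : ℝ → Vec d → Mat d)
    (F : ℝ → Vec d → ℝ → Vec d → Mat d → ℝ)
    (Fr : ℝ → Vec d → ℝ → Vec d → Mat d → ℝ)
    (Fp : ℝ → Vec d → ℝ → Vec d → Mat d → Vec d)
    (Fγ : ℝ → Vec d → ℝ → Vec d → Mat d → Mat d) : Prop where
  lipschitz : ∃ L : ℝ, 0 ≤ L ∧ ∀ t x x' r r' p p' γ γ',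
    |F t x r p γ - F t x' r' p' γ'| ≤ L * (‖x - x'‖ + |r - r'| + ‖p - p'‖ + ‖γ - γ'‖)
  bound_at_zero : ∃ C : ℝ, ∀ t x, |F t x 0 0 0| ≤ C
  differentiable : ∀ t x r p γ, DifferentiableAt ℝ
    (fun q : ℝ × Vec d × Mat d => F t x q.1 q.2.1 q.2.2) (r, p, γ)
  deriv_eq : ∀ t x r p γ (dq : ℝ × Vec d × Mat d),
    fderiv ℝ (fun q : ℝ × Vec d × Mat d => F t x q.1 q.2.1 q.2.2) (r, p, γ) dq
      = Fr t x r p γ * dq.1 + Fp t x r p γ ⬝ᵥ dq.2.1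
        + ∑ i, ∑ j, Fγ t x r p γ i j * dq.2.2 i j
  psd : ∀ t x r p γ, (Fγ t x r p γ).PosSemidef
  trace_le_one : ∀ t x r p γ, ((σ t x * (σ t x)ᵀ)⁻¹ * Fγ t x r p γ).trace ≤ 1
  lower_bound : ∃ K : ℝ, 0 ≤ K ∧ ∀ t x r p γ (w : Vec d),
    Fp t x r p γ ⬝ᵥ w + w ⬝ᵥ (Fγ t x r p γ).mulVec w ≥ -K

/-- The backward scheme: `schemeAux … k` is the approximation with `k` time steps
remaining before the horizon `T` (so it corresponds to time `T − k·(T/n)`). -/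
def schemeAux {d : ℕ} (T : ℝ) (F : ℝ → Vec d → ℝ → Vec d → Mat d → ℝ)
    (μ : ℝ → Vec d → Vec d) (σ : ℝ → Vec d → Mat d) (g : Vec d → ℝ) (n : ℕ) :
    ℕ → Vec d → ℝ
  | 0 => g
  | (k + 1) => step F μ σ (T / n) (T - (k + 1) * (T / n)) (schemeAux T F μ σ g n k)

/-- The discrete time approximation `v^h(t_i, ·)` with `h = T/n` and `t_i = i·T/n`:
`v^h(t_n,·) = g` and `v^h(t_i,·) = T_h[v^h](t_i,·)`. -/
def vh {d : ℕ} (T : ℝ) (F : ℝ → Vec d → ℝ → Vec d → Mat d → ℝ)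
    (μ : ℝ → Vec d → Vec d) (σ : ℝ → Vec d → Mat d) (g : Vec d → ℝ) (n i : ℕ) :
    Vec d → ℝ :=
  schemeAux T F μ σ g n (n - i)

lemma iterate_one_add_mul_add_le {a b M : ℝ} (ha : 0 ≤ a) (hb : 0 ≤ b) (hM : 0 ≤ M) (k : ℕ) :
    (fun m => (1 + a) * m + b)^[k] M ≤ (M + k * b) * exp (k * a) := by
  simpa using discrete_gronwall (u := fun k => (fun m => (1 + a) * m + b)^[k] M) (n₀ := 0) hM
    (fun n _ => (iterate_succ_apply' _ n M).le) (fun _ _ => ha) (fun _ _ => hb) k.zero_le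

section WeightedMean
variable {Ω : Type*} {mΩ : MeasurableSpace Ω} {P : Measure Ω}

lemma norm_integral_smul_le_of_neg_le [IsProbabilityMeasure P] {E : Type*} [NormedAddCommGroup E]
    [NormedSpace ℝ E] {Z : Ω → ℝ} {φ : Ω → E} {c M : ℝ} (hc : 0 ≤ c) (hZ : Integrable Z P)
    (hcZ : ∀ᵐ ω ∂P, -c ≤ Z ω) (hφ : ∀ᵐ ω ∂P, ‖φ ω‖ ≤ M) :
    ‖∫ ω, Z ω • φ ω ∂P‖ ≤ M * (∫ ω, Z ω ∂P + 2 * c) := by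
  obtain ⟨ω₀, hω₀⟩ := hφ.exists
  have hM : 0 ≤ M := (norm_nonneg _).trans hω₀
  calc ‖∫ ω, Z ω • φ ω ∂P‖ ≤ ∫ ω, M * (Z ω + 2 * c) ∂P := by
        refine norm_integral_le_of_norm_le ((hZ.add (integrable_const _)).const_mul M) ?_
        filter_upwards [hcZ, hφ] with ω hZω hφω
        have habs : |Z ω| ≤ Z ω + 2 * c := abs_le.mpr ⟨by linarith, by linarith⟩
        rw [norm_smul, mul_comm, Real.norm_eq_abs]
        gcongr
    _ = M * (∫ ω, Z ω ∂P + 2 * c) := by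
        rw [integral_const_mul, integral_add hZ (integrable_const _)]
        simp

lemma exists_integral_add_mul_comp_integral_smul_eq {V : Type*} [NormedAddCommGroup V]
    [NormedSpace ℝ V] [CompleteSpace V] {f : V → ℝ} (hf : Differentiable ℝ f) (h : ℝ)
    {φ : Ω → ℝ} {H : Ω → V} (hφ : Integrable φ P) (hφH : Integrable (fun ω => φ ω • H ω) P) :
    ∃ z, ∫ ω, φ ω ∂P + h * f (∫ ω, φ ω • H ω ∂P)
      = ∫ ω, (1 + h * fderiv ℝ f z (H ω)) * φ ω ∂P + h * f 0 := by
  obtain ⟨z, -, hz⟩ := domain_mvt (x := 0) (y := ∫ ω, φ ω • H ω ∂P)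
    (fun q _ => (hf q).hasFDerivAt.hasFDerivWithinAt) convex_univ (mem_univ _) (mem_univ _)
  refine ⟨z, ?_⟩
  have hD : Integrable (fun ω => h * fderiv ℝ f z (φ ω • H ω)) P :=
    ((fderiv ℝ f z).integrable_comp hφH).const_mul h
  have hmean : ∫ ω, (1 + h * fderiv ℝ f z (H ω)) * φ ω ∂P
      = ∫ ω, φ ω ∂P + h * fderiv ℝ f z (∫ ω, φ ω • H ω ∂P) := by
    rw [← ContinuousLinearMap.integral_comp_comm _ hφH, ← integral_const_mul, ← integral_add hφ hD]
    congr with ω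
    rw [map_smul, smul_eq_mul]
    ring
  rw [sub_zero] at hz
  rw [hmean, ← hz]
  ring

lemma abs_integral_add_mul_comp_integral_smul_le [IsProbabilityMeasure P] {V : Type*}
    [NormedAddCommGroup V] [NormedSpace ℝ V] [CompleteSpace V] {f : V → ℝ}
    (hf : Differentiable ℝ f) {h b c M : ℝ} {φ : Ω → ℝ} {H : Ω → V} (hH : Integrable H P)
    (hφ : AEStronglyMeasurable φ P) (hφM : ∀ᵐ ω ∂P, |φ ω| ≤ M) (hc : 0 ≤ c)
    (hfc : ∀ z, ∀ᵐ ω ∂P, -c ≤ 1 + h * fderiv ℝ f z (H ω))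
    (hfb : ∀ z, h * fderiv ℝ f z (∫ ω, H ω ∂P) ≤ b) :
    |∫ ω, φ ω ∂P + h * f (∫ ω, φ ω • H ω ∂P)| ≤ M * (1 + b + 2 * c) + |h * f 0| := by
  obtain ⟨ω₀, hω₀⟩ := hφM.exists
  have hM : 0 ≤ M := (abs_nonneg _).trans hω₀
  obtain ⟨z, hz⟩ := exists_integral_add_mul_comp_integral_smul_eq hf h (.of_bound hφ M hφM)
    (hH.bdd_smul M hφ hφM)
  have hD : Integrable (fun ω => h * fderiv ℝ f z (H ω)) P :=
    ((fderiv ℝ f z).integrable_comp hH).const_mul h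
  have hmean : ∫ ω, (1 + h * fderiv ℝ f z (H ω)) ∂P ≤ 1 + b := by
    rw [integral_add (integrable_const 1) hD, integral_const_mul,
      ContinuousLinearMap.integral_comp_comm _ hH, integral_const, probReal_univ, one_smul]
    linarith [hfb z]
  have hweighted : |∫ ω, (1 + h * fderiv ℝ f z (H ω)) * φ ω ∂P|
      ≤ M * (∫ ω, (1 + h * fderiv ℝ f z (H ω)) ∂P + 2 * c) :=
    norm_integral_smul_le_of_neg_le (φ := φ) hc ((integrable_const 1).add hD) (hfc z) hφM
  rw [hz]
  refine (abs_add_le _ _).trans (add_le_add_left (hweighted.trans ?_) _)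
  gcongr

end WeightedMean

section MatrixValued

lemma trace_mul_eq_sum_sum_of_isSymm {n R : Type*} [Fintype n] [CommSemiring R]
    {G : Matrix n n R} (hG : G.IsSymm) (A : Matrix n n R) :
    (A * G).trace = ∑ i, ∑ j, G i j * A i j := by
  rw [← hG.eq, ← sum_hadamard_eq, hG.eq]
  simp only [hadamard_apply, mul_comm]

lemma stronglyMeasurable_matrix {α m n E : Type*} [MeasurableSpace α] [Countable m] [Countable n]
    [TopologicalSpace E] [SecondCountableTopology E] [TopologicalSpace.PseudoMetrizableSpace E]
    [MeasurableSpace E] [BorelSpace E] {A : α → Matrix m n E}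
    (hA : ∀ i j, Measurable fun a => A a i j) : StronglyMeasurable A :=
  (measurable_pi_lambda (fun a i j => A a i j) fun i =>
    measurable_pi_lambda (fun a j => A a i j) (hA i)).stronglyMeasurable

lemma stronglyMeasurable_matrix_inv {α ι 𝕜 : Type*} [MeasurableSpace α] [Fintype ι]
    [DecidableEq ι] [Field 𝕜] [TopologicalSpace 𝕜] [IsTopologicalRing 𝕜] [ContinuousInv₀ 𝕜]
    [TopologicalSpace.MetrizableSpace 𝕜] {A : α → Matrix ι ι 𝕜} (hA : StronglyMeasurable A) :
    StronglyMeasurable fun a => (A a)⁻¹ := by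
  simp only [Matrix.inv_def, Ring.inverse_eq_inv']
  exact (continuous_id.matrix_det.comp_stronglyMeasurable hA).inv₀.smul
    (continuous_id.matrix_adjugate.comp_stronglyMeasurable hA)

/-- The linear map `S ↦ A S B` on matrices. It is written on function types because the Bochner
integral uses the norm topology, while `Matrix` carries a topology instance of its own. -/
def mulMulLinearMap {R l m n o : Type*} [CommSemiring R] [Fintype m] [Fintype n]
    (A : Matrix l m R) (B : Matrix n o R) : (m → n → R) →ₗ[R] l → o → R :=
  (ofLinearEquiv R).symm.toLinearMap ∘ₗ mulRightLinearMap l R B ∘ₗ mulLeftLinearMap n R A ∘ₗ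
    (ofLinearEquiv R).toLinearMap

variable {l m n o : Type*} [Fintype l] [Fintype m] [Fintype n] [Fintype o]
  {Ω : Type*} {mΩ : MeasurableSpace Ω} {P : Measure Ω} {S : Ω → m → n → ℝ}

lemma integrable_matrix_mul_mul (A : Matrix l m ℝ) (B : Matrix n o ℝ) (hS : Integrable S P) :
    Integrable (fun ω i j => (A * of (S ω) * B) i j) P :=
  (mulMulLinearMap A B).toContinuousLinearMap.integrable_comp hS

lemma integral_matrix_mul_mul (A : Matrix l m ℝ) (B : Matrix n o ℝ) (hS : Integrable S P) :
    ∫ ω, (fun i j => (A * of (S ω) * B) i j) ∂P = A * of (∫ ω, S ω ∂P) * B :=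
  (mulMulLinearMap A B).toContinuousLinearMap.integral_comp_comm hS

end MatrixValued

section ProductMoments
variable {ι : Type*} [Fintype ι] {ν : ι → Measure ℝ} [∀ i, IsProbabilityMeasure (ν i)]

lemma memLp_eval_pi {p : ENNReal} {i : ι} (hν : MemLp id p (ν i)) :
    MemLp (fun w : ι → ℝ => w i) p (Measure.pi ν) :=
  hν.comp_measurePreserving (measurePreserving_eval ν i)

lemma covariance_eval_pi [DecidableEq ι] (hν : ∀ i, MemLp id 2 (ν i)) (i j : ι) :
    cov[fun w => w i, fun w => w j; Measure.pi ν] = if i = j then Var[id; ν i] else 0 := by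
  split_ifs with hij
  · subst hij
    rw [covariance_self (measurable_pi_apply i).aemeasurable]
    exact (measurePreserving_eval ν i).variance_fun_comp aemeasurable_id
  · have hindep := (iIndepFun_pi (μ := ν) (X := fun _ => id) fun _ => aemeasurable_id).indepFun hij
    exact hindep.covariance_eq_zero (memLp_eval_pi (hν i)) (memLp_eval_pi (hν j))

end ProductMoments

section Gaussian
variable {d : ℕ}

instance isProbabilityMeasure_gaussVec (d : ℕ) (h : ℝ) : IsProbabilityMeasure (gaussVec d h) := by
  unfold gaussVec; infer_instance

lemma memLp_eval_gaussVec (h : ℝ) (i : Fin d) : MemLp (fun w => w i) 2 (gaussVec d h) :=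
  memLp_eval_pi (memLp_id_gaussianReal' 2 (by simp))

lemma integrable_id_gaussVec (d : ℕ) (h : ℝ) : Integrable id (gaussVec d h) :=
  Integrable.of_eval fun i => (memLp_eval_gaussVec h i).integrable one_le_two

lemma integral_eval_gaussVec (h : ℝ) (i : Fin d) : ∫ w, w i ∂gaussVec d h = 0 :=
  (integral_comp_eval (X := fun _ => ℝ) (f := fun r : ℝ => r)
    aestronglyMeasurable_id).trans integral_id_gaussianReal

lemma integral_id_gaussVec (d : ℕ) (h : ℝ) : ∫ w, w ∂gaussVec d h = 0 := by
  ext i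
  rw [eval_integral fun i => (memLp_eval_gaussVec h i).integrable one_le_two]
  exact integral_eval_gaussVec h i

lemma integral_eval_mul_eval_gaussVec {h : ℝ} (hh : 0 ≤ h) (i j : Fin d) :
    ∫ w, w i * w j ∂gaussVec d h = h * (1 : Mat d) i j := by
  have hcov := covariance_eq_sub (memLp_eval_gaussVec h i) (memLp_eval_gaussVec h j)
  rw [integral_eval_gaussVec, zero_mul, sub_zero, gaussVec,
    covariance_eval_pi fun _ => memLp_id_gaussianReal' 2 (by simp), variance_id_gaussianReal,
    Real.coe_toNNReal _ hh] at hcov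
  rw [Matrix.one_apply, mul_ite, mul_one, mul_zero]
  exact hcov.symm

lemma integrable_eval_mul_eval_sub_gaussVec (d : ℕ) (h : ℝ) :
    Integrable (fun w i j => w i * w j - h * (1 : Mat d) i j) (gaussVec d h) :=
  Integrable.of_eval fun i => Integrable.of_eval fun j =>
    ((memLp_eval_gaussVec h i).integrable_mul (memLp_eval_gaussVec h j)).sub (integrable_const _)

lemma integral_eval_mul_eval_sub_gaussVec {h : ℝ} (hh : 0 ≤ h) :
    ∫ w, (fun i j => w i * w j - h * (1 : Mat d) i j) ∂gaussVec d h = 0 := by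
  have hint := (integrable_eval_mul_eval_sub_gaussVec d h).eval
  ext i j
  have hmul : Integrable (fun w => w i * w j) (gaussVec d h) :=
    (memLp_eval_gaussVec h i).integrable_mul (memLp_eval_gaussVec h j)
  rw [eval_integral hint, eval_integral (hint i).eval, integral_sub hmul (integrable_const _),
    integral_eval_mul_eval_gaussVec hh, integral_const, probReal_univ, one_smul, sub_self]
  rfl

end Gaussian

section Weight
variable {d : ℕ} (σ : ℝ → Vec d → Mat d) {h : ℝ} (t : ℝ) (x : Vec d)

/-- The space of the arguments `(r, p, γ)` of `F`, with a function type for the matrices `γ`, as in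
`mulMulLinearMap`. -/
abbrev JetSpace (d : ℕ) := ℝ × Vec d × (Fin d → Fin d → ℝ)

/-- The weight `(1, H_1^h, H_2^h)(t,x)`, whose product with the next-time value has as mean the
approximation of the function, its gradient and its Hessian that is plugged into `F`. -/
def eulerWeight (σ : ℝ → Vec d → Mat d) (h t : ℝ) (x w : Vec d) : JetSpace d :=
  (1, H1w σ h t x w, fun i j => H2w σ h t x w i j)

lemma integrable_H1w : Integrable (H1w σ h t x) (gaussVec d h) :=
  ((mulVecLin (σ t x)ᵀ⁻¹).toContinuousLinearMap.integrable_comp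
    (integrable_id_gaussVec d h)).smul (1 / h)

lemma integral_H1w : ∫ w, H1w σ h t x w ∂gaussVec d h = 0 := by
  have hlin : ∫ w, (σ t x)ᵀ⁻¹ *ᵥ w ∂gaussVec d h = (σ t x)ᵀ⁻¹ *ᵥ ∫ w, w ∂gaussVec d h :=
    (mulVecLin (σ t x)ᵀ⁻¹).toContinuousLinearMap.integral_comp_comm (integrable_id_gaussVec d h)
  simp only [H1w]
  rw [integral_smul, hlin, integral_id_gaussVec, mulVec_zero, smul_zero]

lemma integrable_H2w : Integrable (fun w i j => H2w σ h t x w i j) (gaussVec d h) :=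
  (integrable_matrix_mul_mul (σ t x)ᵀ⁻¹ (σ t x)⁻¹
    (integrable_eval_mul_eval_sub_gaussVec d h)).smul (1 / h ^ 2)

lemma integral_H2w (hh : 0 ≤ h) :
    ∫ w, (fun i j => H2w σ h t x w i j) ∂gaussVec d h = 0 := by
  have hmean := integral_matrix_mul_mul (σ t x)ᵀ⁻¹ (σ t x)⁻¹
    (integrable_eval_mul_eval_sub_gaussVec d h)
  rw [integral_eval_mul_eval_sub_gaussVec hh, of_zero, Matrix.mul_zero, Matrix.zero_mul] at hmean
  exact (integral_smul (1 / h ^ 2) _).trans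
    ((congrArg ((1 / h ^ 2) • ·) hmean).trans (smul_zero (1 / h ^ 2)))

lemma integrable_eulerWeight : Integrable (eulerWeight σ h t x) (gaussVec d h) :=
  (integrable_const _).prodMk ((integrable_H1w σ t x).prodMk (integrable_H2w σ t x))

lemma integral_eulerWeight (hh : 0 ≤ h) : ∫ w, eulerWeight σ h t x w ∂gaussVec d h = (1, 0) := by
  have h1 := integrable_H1w σ (h := h) t x
  have h2 := integrable_H2w σ (h := h) t x
  simp only [eulerWeight]
  rw [integral_pair (integrable_const _) (h1.prodMk h2), integral_pair h1 h2, integral_H1w,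
    integral_H2w σ t x hh, integral_const, probReal_univ, one_smul]
  rfl

lemma H2w_eq_vecMulVec_sub (hh : h ≠ 0) (w : Vec d) :
    H2w σ h t x w = vecMulVec (H1w σ h t x w) (H1w σ h t x w)
      - (1 / h) • (σ t x * (σ t x)ᵀ)⁻¹ := by
  have hww : vecMulVec ((σ t x)ᵀ⁻¹ *ᵥ w) ((σ t x)ᵀ⁻¹ *ᵥ w)
      = (σ t x)ᵀ⁻¹ * vecMulVec w w * (σ t x)⁻¹ := by
    rw [mul_vecMulVec, vecMulVec_mul, ← mulVec_transpose, transpose_nonsing_inv]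
  simp only [H2w, H1w, vecMulVec_smul, smul_vecMulVec, hww, Matrix.mul_inv_rev, Matrix.mul_sub,
    Matrix.sub_mul, Matrix.mul_smul, Matrix.smul_mul, Matrix.mul_one, smul_sub, smul_smul]
  congr 1 <;> congr 1 <;> field_simp

end Weight

section OneStep
variable {d : ℕ} {μ : ℝ → Vec d → Vec d} {σ : ℝ → Vec d → Mat d} {h M : ℝ} {ψ : Vec d → ℝ}

lemma continuous_euler (μ : ℝ → Vec d → Vec d) (σ : ℝ → Vec d → Mat d) (h t : ℝ) (x : Vec d) :
    Continuous (euler μ σ h t x) :=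
  continuous_const.add (continuous_const.matrix_mulVec continuous_id)

lemma integrable_comp_euler_smul_eulerWeight (hψ : Measurable ψ) (hψM : ∀ y, |ψ y| ≤ M)
    (t : ℝ) (x : Vec d) :
    Integrable (fun w => ψ (euler μ σ h t x w) • eulerWeight σ h t x w) (gaussVec d h) :=
  (integrable_eulerWeight σ t x).bdd_smul M
    (hψ.comp (continuous_euler μ σ h t x).measurable).aestronglyMeasurable
    (ae_of_all _ fun _ => hψM _)

/-- `F(t,x,·,·,·)` as a function on `JetSpace d`. -/
def onJets (F : ℝ → Vec d → ℝ → Vec d → Mat d → ℝ) (t : ℝ) (x : Vec d) (q : JetSpace d) : ℝ :=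
  F t x q.1 q.2.1 (of q.2.2)

lemma step_eq_integral_add_onJets (F : ℝ → Vec d → ℝ → Vec d → Mat d → ℝ) (hψ : Measurable ψ)
    (hψM : ∀ y, |ψ y| ≤ M) (t : ℝ) (x : Vec d) :
    step F μ σ h t ψ x = ∫ w, ψ (euler μ σ h t x w) ∂gaussVec d h
      + h * onJets F t x (∫ w, ψ (euler μ σ h t x w) • eulerWeight σ h t x w ∂gaussVec d h) := by
  have hint := integrable_comp_euler_smul_eulerWeight (μ := μ) (σ := σ) (h := h) hψ hψM t x
  have hentry (i : Fin d) := hint.snd.snd.eval i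
  rw [onJets, fst_integral hint, snd_integral hint, fst_integral hint.snd, snd_integral hint.snd,
    step]
  congr 3
  · simp [eulerWeight]
  · ext i
    exact (eval_integral hint.snd.fst.eval i).symm
  · ext i j
    exact ((congrFun (eval_integral hint.snd.snd.eval i) j).trans
      (eval_integral (hentry i).eval j)).symm

lemma trace_H2w_mul (hh : h ≠ 0) (t : ℝ) (x w : Vec d) (G : Mat d) :
    h * (H2w σ h t x w * G).trace
      = h * (H1w σ h t x w ⬝ᵥ G *ᵥ H1w σ h t x w) - ((σ t x * (σ t x)ᵀ)⁻¹ * G).trace := by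
  rw [H2w_eq_vecMulVec_sub σ t x hh, Matrix.sub_mul, trace_sub, vecMulVec_mul, trace_vecMulVec,
    Matrix.smul_mul, trace_smul, dotProduct_comm, ← dotProduct_mulVec, smul_eq_mul]
  field_simp

lemma abs_fderiv_onJets_one_le {F : ℝ → Vec d → ℝ → Vec d → Mat d → ℝ} {L : NNReal} {t : ℝ}
    {x : Vec d} (hL : LipschitzWith L (onJets F t x)) (z : JetSpace d) :
    |fderiv ℝ (onJets F t x) z (1, 0)| ≤ L := by
  simpa using (fderiv ℝ (onJets F t x) z).le_of_opNorm_le (norm_fderiv_le_of_lipschitz ℝ hL) (1, 0)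

end OneStep

namespace AssumptionF
variable {d : ℕ} {σ : ℝ → Vec d → Mat d}
  {F Fr : ℝ → Vec d → ℝ → Vec d → Mat d → ℝ} {Fp : ℝ → Vec d → ℝ → Vec d → Mat d → Vec d}
  {Fγ : ℝ → Vec d → ℝ → Vec d → Mat d → Mat d} {h : ℝ}

lemma exists_lipschitzWith_onJets (hF : AssumptionF d σ F Fr Fp Fγ) :
    ∃ L : NNReal, ∀ t, LipschitzWith L fun q : Vec d × JetSpace d => onJets F t q.1 q.2 := by
  obtain ⟨L, hL0, hL⟩ := hF.lipschitz
  refine ⟨(4 * L).toNNReal, fun t => LipschitzWith.of_dist_le_mul fun q q' => ?_⟩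
  rw [Real.dist_eq, Real.coe_toNNReal _ (by positivity), dist_eq_norm]
  refine (hL t _ _ _ _ _ _ _ _).trans ?_
  have hx : ‖q.1 - q'.1‖ ≤ ‖q - q'‖ := norm_fst_le (q - q')
  have hjet : ‖q.2 - q'.2‖ ≤ ‖q - q'‖ := norm_snd_le (q - q')
  have hr : |q.2.1 - q'.2.1| ≤ ‖q.2 - q'.2‖ := norm_fst_le (q.2 - q'.2)
  have hpγ : ‖q.2.2 - q'.2.2‖ ≤ ‖q.2 - q'.2‖ := norm_snd_le (q.2 - q'.2)
  have hp : ‖q.2.2.1 - q'.2.2.1‖ ≤ ‖q.2.2 - q'.2.2‖ := norm_fst_le (q.2.2 - q'.2.2)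
  have hγ : ‖of q.2.2.2 - of q'.2.2.2‖ ≤ ‖q.2.2 - q'.2.2‖ := norm_snd_le (q.2.2 - q'.2.2)
  rw [mul_comm 4 L, mul_assoc]
  exact mul_le_mul_of_nonneg_left (by linarith) hL0

lemma differentiable_onJets (hF : AssumptionF d σ F Fr Fp Fγ) (t : ℝ) (x : Vec d) :
    Differentiable ℝ (onJets F t x) :=
  fun q => hF.differentiable t x q.1 q.2.1 (of q.2.2)

lemma fderiv_onJets_apply (hF : AssumptionF d σ F Fr Fp Fγ) (t : ℝ) (x : Vec d)
    (z q : JetSpace d) :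
    fderiv ℝ (onJets F t x) z q = Fr t x z.1 z.2.1 (of z.2.2) * q.1
      + Fp t x z.1 z.2.1 (of z.2.2) ⬝ᵥ q.2.1
      + (of q.2.2 * Fγ t x z.1 z.2.1 (of z.2.2)).trace := by
  have hsymm : (Fγ t x z.1 z.2.1 (of z.2.2)).IsSymm := (hF.psd _ _ _ _ _).isHermitian
  rw [trace_mul_eq_sum_sum_of_isSymm hsymm]
  exact hF.deriv_eq t x z.1 z.2.1 (of z.2.2) (q.1, q.2.1, of q.2.2)

lemma neg_mul_le_one_add_mul_fderiv_onJets (hF : AssumptionF d σ F Fr Fp Fγ) {L : NNReal} {K : ℝ}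
    (hK : ∀ t x r p γ (u : Vec d),
      Fp t x r p γ ⬝ᵥ u + u ⬝ᵥ (Fγ t x r p γ).mulVec u ≥ -K)
    {t : ℝ} {x : Vec d} (hL : LipschitzWith L (onJets F t x)) (hh : 0 < h) (w : Vec d)
    (z : JetSpace d) :
    -(h * (L + K)) ≤ 1 + h * fderiv ℝ (onJets F t x) z (eulerWeight σ h t x w) := by
  have htrace := hF.trace_le_one t x z.1 z.2.1 (of z.2.2)
  have hlower := mul_le_mul_of_nonneg_left
    (hK t x z.1 z.2.1 (of z.2.2) (H1w σ h t x w)) hh.le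
  have hr := mul_le_mul_of_nonneg_left (abs_le.mp (abs_fderiv_onJets_one_le hL z)).1 hh.le
  have hγ := trace_H2w_mul hh.ne' t x w (Fγ t x z.1 z.2.1 (of z.2.2)) (σ := σ)
  rw [hF.fderiv_onJets_apply] at hr ⊢
  simp only [Prod.fst_zero, Prod.snd_zero, dotProduct_zero, of_zero, Matrix.zero_mul, trace_zero,
    eulerWeight] at hr ⊢
  change _ ≤ 1 + h * (_ + (H2w σ h t x w * _).trace)
  linarith

lemma exists_abs_step_le (hF : AssumptionF d σ F Fr Fp Fγ) :
    ∃ A ≥ 0, ∃ B ≥ 0, ∀ {μ h t ψ M}, 0 < h → Measurable ψ → (∀ y, |ψ y| ≤ M) → ∀ x,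
      |step F μ σ h t ψ x| ≤ (1 + h * A) * M + h * B := by
  obtain ⟨L, hL⟩ := hF.exists_lipschitzWith_onJets
  obtain ⟨C₀, hC₀⟩ := hF.bound_at_zero
  obtain ⟨K, hK0, hK⟩ := hF.lower_bound
  refine ⟨3 * L + 2 * K, by positivity, C₀, (abs_nonneg _).trans (hC₀ 0 0), ?_⟩
  intro μ h t ψ M hh hψ hψM x
  have hLx : LipschitzWith L (onJets F t x) := by
    rw [← mul_one L]
    exact (hL t).comp (LipschitzWith.prodMk_left x)
  have hzero : |h * onJets F t x 0| ≤ h * C₀ := by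
    rw [abs_mul, abs_of_pos hh]
    exact mul_le_mul_of_nonneg_left (hC₀ t x) hh.le
  have hmean (z : JetSpace d) :
      h * fderiv ℝ (onJets F t x) z (∫ w, eulerWeight σ h t x w ∂gaussVec d h) ≤ h * L := by
    rw [integral_eulerWeight σ t x hh.le]
    exact mul_le_mul_of_nonneg_left (abs_le.mp (abs_fderiv_onJets_one_le hLx z)).2 hh.le
  have hstep := abs_integral_add_mul_comp_integral_smul_le (hF.differentiable_onJets t x)
    (integrable_eulerWeight σ t x)
    (hψ.comp (continuous_euler μ σ h t x).measurable).aestronglyMeasurable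
    (ae_of_all _ fun _ => hψM _) (by positivity : 0 ≤ h * (L + K))
    (fun z => ae_of_all _ fun w => hF.neg_mul_le_one_add_mul_fderiv_onJets hK hLx hh w z) hmean
  rw [step_eq_integral_add_onJets F hψ hψM]
  refine hstep.trans ((add_le_add_right hzero _).trans_eq ?_)
  ring

end AssumptionF

section Scheme
variable {d : ℕ} {T : ℝ} {F : ℝ → Vec d → ℝ → Vec d → Mat d → ℝ} {μ : ℝ → Vec d → Vec d}
  {σ : ℝ → Vec d → Mat d} {h t M : ℝ} {ψ g : Vec d → ℝ}

lemma measurable_euler (hμ : Measurable (μ t)) (hσ : StronglyMeasurable (σ t)) (h : ℝ) :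
    Measurable fun q : Vec d × Vec d => euler μ σ h t q.1 q.2 := by
  have hσw : StronglyMeasurable fun q : Vec d × Vec d => σ t q.1 *ᵥ q.2 :=
    (continuous_fst.matrix_mulVec continuous_snd).comp_stronglyMeasurable
      ((hσ.comp_measurable measurable_fst).prodMk measurable_snd.stronglyMeasurable)
  exact (measurable_fst.add ((hμ.comp measurable_fst).const_smul h)).add hσw.measurable

lemma stronglyMeasurable_eulerWeight (hσ : StronglyMeasurable (σ t)) (h : ℝ) :
    StronglyMeasurable fun q : Vec d × Vec d => eulerWeight σ h t q.1 q.2 := by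
  have hinv : StronglyMeasurable fun q : Vec d × Vec d => (σ t q.1)⁻¹ :=
    (stronglyMeasurable_matrix_inv hσ).comp_measurable measurable_fst
  have hinvT : StronglyMeasurable fun q : Vec d × Vec d => (σ t q.1)ᵀ⁻¹ := by
    simp only [← transpose_nonsing_inv]
    exact continuous_id.matrix_transpose.comp_stronglyMeasurable hinv
  have hcont : Continuous fun q : Mat d × Mat d × Vec d => (((1 : ℝ), (1 / h) • q.1 *ᵥ q.2.2,
      (1 / h ^ 2) • (q.1 * (vecMulVec q.2.2 q.2.2 - h • (1 : Mat d)) * q.2.1)) :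
        ℝ × Vec d × Mat d) := by
    fun_prop
  exact hcont.comp_stronglyMeasurable (hinvT.prodMk (hinv.prodMk measurable_snd.stronglyMeasurable))

lemma measurable_step (hμ : Measurable (μ t)) (hσ : StronglyMeasurable (σ t))
    (hF : Continuous fun q : Vec d × JetSpace d => onJets F t q.1 q.2) (hψ : Measurable ψ)
    (hψM : ∀ y, |ψ y| ≤ M) : Measurable (step F μ σ h t ψ) := by
  have hval : StronglyMeasurable fun q : Vec d × Vec d => ψ (euler μ σ h t q.1 q.2) :=
    (hψ.comp (measurable_euler hμ hσ h)).stronglyMeasurable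
  have hmean : Measurable fun x => ∫ w, ψ (euler μ σ h t x w) ∂gaussVec d h :=
    hval.integral_prod_right'.measurable
  have hjet : Measurable fun x =>
      ∫ w, ψ (euler μ σ h t x w) • eulerWeight σ h t x w ∂gaussVec d h :=
    (hval.smul (stronglyMeasurable_eulerWeight hσ h)).integral_prod_right'.measurable
  rw [funext (step_eq_integral_add_onJets (μ := μ) (σ := σ) (h := h) F hψ hψM t)]
  exact hmean.add ((hF.measurable.comp (measurable_id.prodMk hjet)).const_mul h)

lemma measurable_schemeAux_and_abs_le {n : ℕ} {a b : ℝ}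
    (hstep : ∀ {t ψ m}, Measurable ψ → (∀ y, |ψ y| ≤ m) →
      Measurable (step F μ σ (T / n) t ψ) ∧
        ∀ x, |step F μ σ (T / n) t ψ x| ≤ (1 + a) * m + b)
    (hg : Measurable g) (hgM : ∀ x, |g x| ≤ M) (k : ℕ) :
    Measurable (schemeAux T F μ σ g n k) ∧
      ∀ x, |schemeAux T F μ σ g n k x| ≤ (fun m => (1 + a) * m + b)^[k] M := by
  induction k with
  | zero => exact ⟨hg, hgM⟩
  | succ k ih =>
    rw [iterate_succ_apply']
    exact hstep ih.1 ih.2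

end Scheme

lemma AssumptionF.exists_abs_vh_le {d : ℕ} {T : ℝ} (hT : 0 < T)
    {μ : ℝ → Vec d → Vec d} {σ : ℝ → Vec d → Mat d} (hμ : ∀ t, Measurable (μ t))
    (hσ : ∀ t, StronglyMeasurable (σ t)) {F Fr : ℝ → Vec d → ℝ → Vec d → Mat d → ℝ}
    {Fp : ℝ → Vec d → ℝ → Vec d → Mat d → Vec d} {Fγ : ℝ → Vec d → ℝ → Vec d → Mat d → Mat d}
    (hF : AssumptionF d σ F Fr Fp Fγ) :
    ∃ A, ∃ B ≥ 0, ∀ {g M}, Measurable g → (∀ x, |g x| ≤ M) → ∀ {n}, 0 < n → ∀ i x,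
      |vh T F μ σ g n i x| ≤ (M + T * B) * exp (T * A) := by
  obtain ⟨A, hA, B, hB, hstep⟩ := hF.exists_abs_step_le
  obtain ⟨L, hL⟩ := hF.exists_lipschitzWith_onJets
  refine ⟨A, B, hB, fun {g M} hg hgM n hn i x => ?_⟩
  have hM : 0 ≤ M := (abs_nonneg _).trans (hgM 0)
  have hh : 0 < T / n := by positivity
  have hscheme := measurable_schemeAux_and_abs_le (T := T) (n := n) (fun {t _ _} hψ hψM =>
    ⟨measurable_step (hμ t) (hσ t) (hL t).continuous hψ hψM, hstep hh hψ hψM⟩) hg hgM (n - i)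
  have htime : (n - i : ℕ) * (T / n) ≤ T := by
    rw [mul_div_left_comm]
    exact mul_le_of_le_one_right hT.le (div_le_one_of_le₀ (by gcongr; omega) n.cast_nonneg)
  calc |vh T F μ σ g n i x| ≤ (fun m => (1 + T / n * A) * m + T / n * B)^[n - i] M := hscheme.2 x
    _ ≤ (M + (n - i : ℕ) * (T / n * B)) * exp ((n - i : ℕ) * (T / n * A)) :=
        iterate_one_add_mul_add_le (by positivity) (by positivity) hM _
    _ ≤ (M + T * B) * exp (T * A) := by
        rw [← mul_assoc, ← mul_assoc]
        gcongr

theorem scheme_uniformly_bounded_general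
    (d : ℕ) (T : ℝ) (hT : 0 < T)
    (μ : ℝ → Vec d → Vec d) (σ : ℝ → Vec d → Mat d)
    (hμmeas : ∀ t, Measurable (μ t)) (hσmeas : ∀ t i j, Measurable fun y => σ t y i j)
    (_hσinv : ∀ s y, IsUnit (σ s y).det)
    (F Fr : ℝ → Vec d → ℝ → Vec d → Mat d → ℝ)
    (Fp : ℝ → Vec d → ℝ → Vec d → Mat d → Vec d)
    (Fγ : ℝ → Vec d → ℝ → Vec d → Mat d → Mat d)
    (hF : AssumptionF d σ F Fr Fp Fγ)
    (g : Vec d → ℝ) (hgmeas : Measurable g) (hgbdd : ∃ Cg : ℝ, ∀ x, |g x| ≤ Cg) :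
    ∃ C > (0 : ℝ), ∀ n : ℕ, 0 < n → ∀ i : ℕ, i ≤ n → ∀ x : Vec d,
      |vh T F μ σ g n i x| ≤ C := by
  obtain ⟨A, B, hB, hvh⟩ :=
    hF.exists_abs_vh_le hT hμmeas fun t => stronglyMeasurable_matrix (hσmeas t)
  obtain ⟨M, hM⟩ := hgbdd
  have hM0 : 0 ≤ M := (abs_nonneg _).trans (hM 0)
  exact ⟨(M + T * B) * exp (T * A) + 1, by positivity, fun n hn i _ x =>
    (hvh hgmeas hM hn i x).trans (le_add_of_nonneg_right zero_le_one)⟩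

/-- Uniform boundedness of the discrete-time approximation (Lemma 3.14 of the paper):
for bounded terminal data `g`, the family `(v^h)` is bounded uniformly in `h = T/n`. -/
theorem scheme_uniformly_bounded
    (d : ℕ) (T : ℝ) (hT : 0 < T)
    (μ : ℝ → Vec d → Vec d) (σ : ℝ → Vec d → Mat d)
    (hμmeas : ∀ i, Measurable fun q : ℝ × Vec d => μ q.1 q.2 i)
    (hσmeas : ∀ i j, Measurable fun q : ℝ × Vec d => σ q.1 q.2 i j)
    (hμbdd : ∃ C : ℝ, ∀ s y, ‖μ s y‖ ≤ C)
    (hσbdd : ∃ C : ℝ, ∀ s y, ‖σ s y‖ ≤ C)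
    (hσinv : ∀ s y, IsUnit (σ s y).det)
    (F Fr : ℝ → Vec d → ℝ → Vec d → Mat d → ℝ)
    (Fp : ℝ → Vec d → ℝ → Vec d → Mat d → Vec d)
    (Fγ : ℝ → Vec d → ℝ → Vec d → Mat d → Mat d)
    (hF : AssumptionF d σ F Fr Fp Fγ)
    (g : Vec d → ℝ) (hgmeas : Measurable g) (hgbdd : ∃ Cg : ℝ, ∀ x, |g x| ≤ Cg) :
    ∃ C > (0 : ℝ), ∀ n : ℕ, 0 < n → ∀ i : ℕ, i ≤ n → ∀ x : Vec d,
      |vh T F μ σ g n i x| ≤ C := by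
  exact scheme_uniformly_bounded_general d T hT μ σ
    (fun _ => measurable_pi_lambda _ fun i => (hμmeas i).comp measurable_prodMk_left)
    (fun _ i j => (hσmeas i j).comp measurable_prodMk_left) hσinv F Fr Fp Fγ hF g hgmeas hgbdd

end
end
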